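/- arXiv:2101.00959 — 8 statements merged into one kernel-verified Lean document; each statement's English description precedes it below -/
import Mathlib

section
/- Let (A, ·, [ , ], ε) be an F-manifold color algebra and (V, ρ, μ) a representation of it. On the G-graded vector space A ⊕ V define, for homogeneous elements x1+v1, x2+v2 (with x_i and v_i of the same degree), [x1+v1, x2+v2]_ρ = [x1,x2] + ρ(x1)v2 − ε(x1,x2)ρ(x2)v1 and (x1+v1)·_μ(x2+v2) = x1·x2 + μ(x1)v2 + ε(x1,x2)μ(x2)v1. Then (A ⊕ V, ·_μ, [ , ]_ρ, ε) is an F-manifold color algebra. -/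
/-!
The semidirect product is built componentwise: the `A`-components of all identities are the
identities of `A`, and only the `V`-components have to be computed.

The formulas of the theorem prescribe the operations on homogeneous pairs only. To obtain bilinear
maps on all of `A × V`, the term `ε(v, x) φ(x) v` is extended linearly from homogeneous vectors
along the two gradings (`exists_twist`). Associativity, required for arbitrary elements,
follows by trilinearity from the homogeneous case, where it is the multiplicativity of `μ`
together with the `ε`-commutativity of `A`.
The Jacobi identity is the homomorphism property of `ρ`.

For the Hertling–Manin relation the key is the formula `Pop_semi_snd`: the `V`-component
of `P_{x+u}(y+v, z+w)` is `R(x,y) w + ε(y,z) R(x,z) v + ε(x,y+z) S(y,z) u`. Comparing the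
contributions of the four vectors, the relation splits into two instances of the axiom on `R` (for
the two arguments of `P`) and two instances of the axiom on `S` (for the two factors of the
subscript).
-/

open Module

set_option synthInstance.maxHeartbeats 1000000
set_option maxHeartbeats 1000000

/-- A skew-symmetric bicharacter on an abelian group `G` with values in the field `K`:
a map `ε : G × G → K \ {0}` with `ε a b * ε b a = 1`, multiplicative in each argument. -/
structure SkewBicharacter (G K : Type*) [AddCommGroup G] [Field K] where
  ε : G → G → K
  ne_zero : ∀ a b : G, ε a b ≠ 0
  mul_symm : ∀ a b : G, ε a b * ε b a = 1
  add_right : ∀ a b c : G, ε a (b + c) = ε a b * ε a c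
  add_left : ∀ a b c : G, ε (a + b) c = ε a c * ε b c

section ColorAlgebras

variable {K G A V : Type*} [Field K] [AddCommGroup G]
  [AddCommGroup A] [Module K A] [AddCommGroup V] [Module K V]

/-- A Lie color algebra structure on a `G`-graded vector space `A = ⊕ A_g`
(grading given by `𝒜 : G → Submodule K A`). -/
structure LieColorAlgebra (ε : SkewBicharacter G K) (𝒜 : G → Submodule K A) where
  bracket : A →ₗ[K] A →ₗ[K] A
  grade : ∀ {a b : G} {x y : A}, x ∈ 𝒜 a → y ∈ 𝒜 b → bracket x y ∈ 𝒜 (a + b)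
  skew : ∀ {a b : G} {x y : A}, x ∈ 𝒜 a → y ∈ 𝒜 b →
    bracket x y = -(ε.ε a b • bracket y x)
  jacobi : ∀ {a b c : G} {x y z : A}, x ∈ 𝒜 a → y ∈ 𝒜 b → z ∈ 𝒜 c →
    ε.ε c a • bracket x (bracket y z) + ε.ε b c • bracket z (bracket x y)
      + ε.ε a b • bracket y (bracket z x) = 0

/-- An `ε`-commutative associative algebra structure on a `G`-graded vector space `A`. -/
structure CommColorAlgebra (ε : SkewBicharacter G K) (𝒜 : G → Submodule K A) where
  mul : A →ₗ[K] A →ₗ[K] A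
  grade : ∀ {a b : G} {x y : A}, x ∈ 𝒜 a → y ∈ 𝒜 b → mul x y ∈ 𝒜 (a + b)
  comm : ∀ {a b : G} {x y : A}, x ∈ 𝒜 a → y ∈ 𝒜 b → mul x y = ε.ε a b • mul y x
  assoc : ∀ x y z : A, mul (mul x y) z = mul x (mul y z)

/-- A pre-Lie color algebra structure on a `G`-graded vector space `A`. -/
structure PreLieColorAlgebra (ε : SkewBicharacter G K) (𝒜 : G → Submodule K A) where
  mul : A →ₗ[K] A →ₗ[K] A
  grade : ∀ {a b : G} {x y : A}, x ∈ 𝒜 a → y ∈ 𝒜 b → mul x y ∈ 𝒜 (a + b)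
  prelie : ∀ {a b c : G} {x y z : A}, x ∈ 𝒜 a → y ∈ 𝒜 b → z ∈ 𝒜 c →
    mul (mul x y) z - mul x (mul y z) = ε.ε a b • (mul (mul y x) z - mul y (mul x z))

/-- A Zinbiel color algebra structure on a `G`-graded vector space `A`. -/
structure ZinbielColorAlgebra (ε : SkewBicharacter G K) (𝒜 : G → Submodule K A) where
  dia : A →ₗ[K] A →ₗ[K] A
  grade : ∀ {a b : G} {x y : A}, x ∈ 𝒜 a → y ∈ 𝒜 b → dia x y ∈ 𝒜 (a + b)
  zinbiel : ∀ {a b c : G} {x y z : A}, x ∈ 𝒜 a → y ∈ 𝒜 b → z ∈ 𝒜 c →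
    dia x (dia y z) = dia (dia x y) z + ε.ε a b • dia (dia y x) z

/-- A representation `(V, μ)` of an `ε`-commutative associative algebra `(A, ·, ε)`. -/
structure CommColorRep (ε : SkewBicharacter G K) {𝒜 : G → Submodule K A}
    (C : CommColorAlgebra ε 𝒜) (𝒱 : G → Submodule K V) where
  μ : A →ₗ[K] Module.End K V
  grade : ∀ {a b : G} {v : V} {x : A}, v ∈ 𝒱 a → x ∈ 𝒜 b → μ x v ∈ 𝒱 (a + b)
  map_mul : ∀ x y : A, μ (C.mul x y) = μ x * μ y

/-- A representation `(V, ρ)` of a Lie color algebra `(A, [,], ε)`. -/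
structure LieColorRep (ε : SkewBicharacter G K) {𝒜 : G → Submodule K A}
    (L : LieColorAlgebra ε 𝒜) (𝒱 : G → Submodule K V) where
  ρ : A →ₗ[K] Module.End K V
  grade : ∀ {a b : G} {v : V} {x : A}, v ∈ 𝒱 a → x ∈ 𝒜 b → ρ x v ∈ 𝒱 (a + b)
  map_bracket : ∀ {a b : G} {x y : A}, x ∈ 𝒜 a → y ∈ 𝒜 b →
    ρ (L.bracket x y) = ρ x * ρ y - ε.ε a b • (ρ y * ρ x)

/-- `P_x(y,z) = [x, y·z] − [x,y]·z − ε(x,y) y·[x,z]`, where `e` stands for `ε(x,y)`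
(i.e. `ε` applied to the degrees of `x` and `y`). -/
def Pop (mul bracket : A →ₗ[K] A →ₗ[K] A) (e : K) (x y z : A) : A :=
  bracket x (mul y z) - mul (bracket x y) z - e • mul y (bracket x z)

/-- An `F`-manifold color algebra: an `ε`-commutative associative algebra and a Lie color
algebra on the same `G`-graded space satisfying the color Hertling–Manin relation. -/
structure FManColorAlgebra (ε : SkewBicharacter G K) (𝒜 : G → Submodule K A) where
  toComm : CommColorAlgebra ε 𝒜
  toLie : LieColorAlgebra ε 𝒜
  hertling_manin : ∀ {a b c d : G} {x y z w : A},
    x ∈ 𝒜 a → y ∈ 𝒜 b → z ∈ 𝒜 c → w ∈ 𝒜 d →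
    Pop toComm.mul toLie.bracket (ε.ε (a + b) c) (toComm.mul x y) z w
      = toComm.mul x (Pop toComm.mul toLie.bracket (ε.ε b c) y z w)
        + ε.ε a b • toComm.mul y (Pop toComm.mul toLie.bracket (ε.ε a c) x z w)

/-- `R(x,y) = ρ(x)μ(y) − ε(x,y) μ(y)ρ(x) − μ([x,y])`, with `e = ε(x,y)`. -/
def Rop (ρ μA : A →ₗ[K] Module.End K V) (bracket : A →ₗ[K] A →ₗ[K] A) (e : K) (x y : A) :
    Module.End K V :=
  ρ x * μA y - e • (μA y * ρ x) - μA (bracket x y)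

/-- `S(x,y) = μ(x)ρ(y) + ε(x,y) μ(y)ρ(x) − ρ(x·y)`, with `e = ε(x,y)`. -/
def Sop (ρ μA : A →ₗ[K] Module.End K V) (mul : A →ₗ[K] A →ₗ[K] A) (e : K) (x y : A) :
    Module.End K V :=
  μA x * ρ y + e • (μA y * ρ x) - ρ (mul x y)

/-- `T(x,y) = −ε(x,y) ρ(y)μ(x) − ρ(x)μ(y) + ρ(x·y)`, with `e = ε(x,y)`. -/
def Tend (ρ μA : A →ₗ[K] Module.End K V) (mul : A →ₗ[K] A →ₗ[K] A) (e : K) (x y : A) :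
    Module.End K V :=
  -(e • (ρ y * μA x)) - ρ x * μA y + ρ (mul x y)

/-- `T(y,z)(w) = −ε(y,z)[z, y·w] − [y, z·w] + [y·z, w]`, with `e = ε(y,z)`. -/
def TopA (mul bracket : A →ₗ[K] A →ₗ[K] A) (e : K) (y z w : A) : A :=
  -(e • bracket z (mul y w)) - bracket y (mul z w) + bracket (mul y z) w

/-- A representation `(V, ρ, μ)` of an `F`-manifold color algebra. -/
structure FManColorRep (ε : SkewBicharacter G K) {𝒜 : G → Submodule K A}
    (F : FManColorAlgebra ε 𝒜) (𝒱 : G → Submodule K V) where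
  toLieRep : LieColorRep ε F.toLie 𝒱
  toCommRep : CommColorRep ε F.toComm 𝒱
  rel_R : ∀ {a b c : G} {x y z : A}, x ∈ 𝒜 a → y ∈ 𝒜 b → z ∈ 𝒜 c →
    Rop toLieRep.ρ toCommRep.μ F.toLie.bracket (ε.ε (a + b) c) (F.toComm.mul x y) z
      = toCommRep.μ x * Rop toLieRep.ρ toCommRep.μ F.toLie.bracket (ε.ε b c) y z
        + ε.ε a b • (toCommRep.μ y * Rop toLieRep.ρ toCommRep.μ F.toLie.bracket (ε.ε a c) x z)
  rel_S : ∀ {a b c : G} {x y z : A}, x ∈ 𝒜 a → y ∈ 𝒜 b → z ∈ 𝒜 c →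
    toCommRep.μ (Pop F.toComm.mul F.toLie.bracket (ε.ε a b) x y z)
      = ε.ε a (b + c) • (Sop toLieRep.ρ toCommRep.μ F.toComm.mul (ε.ε b c) y z * toCommRep.μ x)
        - toCommRep.μ x * Sop toLieRep.ρ toCommRep.μ F.toComm.mul (ε.ε b c) y z

/-- `F1(x,y,z) = x∗(y⋄z) − ε(x,y) y⋄(x∗z) − [x,y]⋄z` with `e = ε(x,y)` and
`[x,y] = x∗y − ε(x,y) y∗x`. -/
def F1op (dia star : A →ₗ[K] A →ₗ[K] A) (e : K) (x y z : A) : A :=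
  star x (dia y z) - e • dia y (star x z) - dia (star x y - e • star y x) z

/-- `F2(x,y,z) = x⋄(y∗z) + ε(x,y) y⋄(x∗z) − (x·y)∗z` with `e = ε(x,y)` and
`x·y = x⋄y + ε(x,y) y⋄x`. -/
def F2op (dia star : A →ₗ[K] A →ₗ[K] A) (e : K) (x y z : A) : A :=
  dia x (star y z) + e • dia y (star x z) - star (dia x y + e • dia y x) z

/-- A pre-`F`-manifold color algebra. -/
structure PreFManColorAlgebra (ε : SkewBicharacter G K) (𝒜 : G → Submodule K A) where
  toZinbiel : ZinbielColorAlgebra ε 𝒜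
  toPreLie : PreLieColorAlgebra ε 𝒜
  rel_F1 : ∀ {a b c d : G} {x y z w : A}, x ∈ 𝒜 a → y ∈ 𝒜 b → z ∈ 𝒜 c → w ∈ 𝒜 d →
    F1op toZinbiel.dia toPreLie.mul (ε.ε (a + b) c)
        (toZinbiel.dia x y + ε.ε a b • toZinbiel.dia y x) z w
      = toZinbiel.dia x (F1op toZinbiel.dia toPreLie.mul (ε.ε b c) y z w)
        + ε.ε a b • toZinbiel.dia y (F1op toZinbiel.dia toPreLie.mul (ε.ε a c) x z w)
  rel_F2 : ∀ {a b c d : G} {x y z w : A}, x ∈ 𝒜 a → y ∈ 𝒜 b → z ∈ 𝒜 c → w ∈ 𝒜 d →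
    toZinbiel.dia (F1op toZinbiel.dia toPreLie.mul (ε.ε a b) x y z
        + ε.ε b c • F1op toZinbiel.dia toPreLie.mul (ε.ε a c) x z y
        + ε.ε a (b + c) • F2op toZinbiel.dia toPreLie.mul (ε.ε b c) y z x) w
      = ε.ε a (b + c) • F2op toZinbiel.dia toPreLie.mul (ε.ε b c) y z (toZinbiel.dia x w)
        - toZinbiel.dia x (F2op toZinbiel.dia toPreLie.mul (ε.ε b c) y z w)

/-- The grading on the dual space: `V*_a = {α | α(x) = 0 for all x ∈ V_b with b ≠ -a}`. -/
def dualGrade (𝒱 : G → Submodule K V) (a : G) : Submodule K ((V →ₗ[K] K)) where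
  carrier := {α | ∀ b : G, b ≠ -a → ∀ x ∈ 𝒱 b, α x = 0}
  add_mem' := by
    intro α β hα hβ b hb x hx
    simp [hα b hb x hx, hβ b hb x hx]
  zero_mem' := by intro b hb x hx; simp
  smul_mem' := by
    intro c α hα b hb x hx
    simp [hα b hb x hx]


/-- `x·y = x⋄y + ε(x,y) y⋄x`, the ε-commutative product induced by a multiplication `dia`,
with `e = ε(x,y)`. -/
def cdot (dia : A →ₗ[K] A →ₗ[K] A) (e : K) (x y : A) : A := dia x y + e • dia y x

/-- `[x,y] = x∗y − ε(x,y) y∗x`, the color commutator induced by a multiplication `star`,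
with `e = ε(x,y)`. -/
def cbr (star : A →ₗ[K] A →ₗ[K] A) (e : K) (x y : A) : A := star x y - e • star y x

end ColorAlgebras

section Semidirect

variable {K G A V : Type*} [Field K] [AddCommGroup G]
  [AddCommGroup A] [Module K A] [AddCommGroup V] [Module K V]

/-- A bilinear map that is prescribed on homogeneous vectors by `(v, x) ↦ ε(v, x) φ(x) v`. -/
theorem exists_twist [DecidableEq G] (ε : SkewBicharacter G K)
    (𝒜 : G → Submodule K A) (𝒱 : G → Submodule K V)
    (hA : DirectSum.IsInternal 𝒜) (hV : DirectSum.IsInternal 𝒱)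
    (φ : A →ₗ[K] Module.End K V) :
    ∃ T : V →ₗ[K] A →ₗ[K] V, ∀ {a b : G} {v : V} {x : A}, v ∈ 𝒱 a → x ∈ 𝒜 b →
      T v x = ε.ε a b • φ x v := by
  let eA := LinearEquiv.ofBijective (DirectSum.coeLinearMap 𝒜) hA
  let eV := LinearEquiv.ofBijective (DirectSum.coeLinearMap 𝒱) hV
  have hsA : ∀ (b : G) (x : A) (hx : x ∈ 𝒜 b),
      eA.symm x = DirectSum.lof K G (fun i => 𝒜 i) b ⟨x, hx⟩ := by
    intro b x hx
    rw [LinearEquiv.symm_apply_eq]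
    exact (DirectSum.coeLinearMap_lof 𝒜 b ⟨x, hx⟩).symm
  have hsV : ∀ (b : G) (x : V) (hx : x ∈ 𝒱 b),
      eV.symm x = DirectSum.lof K G (fun i => 𝒱 i) b ⟨x, hx⟩ := by
    intro b x hx
    rw [LinearEquiv.symm_apply_eq]
    exact (DirectSum.coeLinearMap_lof 𝒱 b ⟨x, hx⟩).symm
  -- `E a` is the operator on `A` that acts on `𝒜 b` as the scalar `ε a b`.
  let E : G → A →ₗ[K] A := fun a =>
    (DirectSum.toModule K G A fun b => ε.ε a b • (𝒜 b).subtype) ∘ₗ eA.symm.toLinearMap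
  refine ⟨(DirectSum.toModule K G (A →ₗ[K] V) fun a =>
    (φ.flip.compl₂ (E a)) ∘ₗ (𝒱 a).subtype) ∘ₗ eV.symm.toLinearMap, ?_⟩
  intro a b v x hv hx
  simp [hsV a v hv, E, hsA b x hx]

/-- The bilinear operation `(x + u, y + v) ↦ B(x, y) + φ(x) v + T(u, y)` on `A × V`. -/
def semi (B : A →ₗ[K] A →ₗ[K] A) (φ : A →ₗ[K] Module.End K V) (T : V →ₗ[K] A →ₗ[K] V) :
    A × V →ₗ[K] A × V →ₗ[K] A × V :=
  LinearMap.mk₂ K (fun p q => (B p.1 q.1, φ p.1 q.2 + T p.2 q.1))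
    (by intro p p' q; ext <;> simp; abel)
    (by intro c p q; ext <;> simp)
    (by intro p q q'; ext <;> simp; abel)
    (by intro c p q; ext <;> simp)

theorem semi_apply (B : A →ₗ[K] A →ₗ[K] A) (φ : A →ₗ[K] Module.End K V)
    (T : V →ₗ[K] A →ₗ[K] V) (p q : A × V) :
    semi B φ T p q = (B p.1 q.1, φ p.1 q.2 + T p.2 q.1) := rfl

theorem SkewBicharacter.eq_inv (ε : SkewBicharacter G K) (a b : G) :
    ε.ε a b = (ε.ε b a)⁻¹ :=
  eq_inv_of_mul_eq_one_left (ε.mul_symm a b)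

theorem prod_induction [DecidableEq G] {𝒜 : G → Submodule K A} {𝒱 : G → Submodule K V}
    (hA : DirectSum.IsInternal 𝒜) (hV : DirectSum.IsInternal 𝒱) {p : A × V → Prop}
    (hom : ∀ (a : G) (x : A) (v : V), x ∈ 𝒜 a → v ∈ 𝒱 a → p (x, v))
    (hadd : ∀ q r, p q → p r → p (q + r)) (q : A × V) : p q := by
  have h0 : p (0, 0) := hom 0 0 0 (zero_mem _) (zero_mem _)
  have h1 : ∀ x : A, p (x, 0) := fun x =>
    Submodule.iSup_induction 𝒜 (motive := fun x => p (x, 0))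
      (hA.submodule_iSup_eq_top ▸ Submodule.mem_top)
      (fun a x hx => hom a x 0 hx (zero_mem _)) h0
      (fun x y hx hy => by simpa using hadd _ _ hx hy)
  have h2 : ∀ v : V, p (0, v) := fun v =>
    Submodule.iSup_induction 𝒱 (motive := fun v => p (0, v))
      (hV.submodule_iSup_eq_top ▸ Submodule.mem_top)
      (fun a v hv => hom a 0 v (zero_mem _) hv) h0
      (fun x y hx hy => by simpa using hadd _ _ hx hy)
  simpa using hadd _ _ (h1 q.1) (h2 q.2)

section

variable {ε : SkewBicharacter G K} {𝒜 : G → Submodule K A} {𝒱 : G → Submodule K V}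
  (F : FManColorAlgebra ε 𝒜) (Rp : FManColorRep ε F 𝒱)

theorem Pop_mem {a b c : G} {x y z : A} (hx : x ∈ 𝒜 a) (hy : y ∈ 𝒜 b) (hz : z ∈ 𝒜 c) (e : K) :
    Pop F.toComm.mul F.toLie.bracket e x y z ∈ 𝒜 (a + b + c) := by
  have h1 := F.toLie.grade hx (F.toComm.grade hy hz)
  have h2 := F.toComm.grade (F.toLie.grade hx hy) hz
  have h3 := F.toComm.grade hy (F.toLie.grade hx hz)
  rw [← add_assoc] at h1
  rw [add_left_comm, ← add_assoc] at h3
  exact sub_mem (sub_mem h1 h2) (Submodule.smul_mem _ _ h3)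

theorem Pop_semi_fst (Tμ Tρ : V →ₗ[K] A →ₗ[K] V) (e : K) (p q r : A × V) :
    (Pop (semi F.toComm.mul Rp.toCommRep.μ Tμ) (semi F.toLie.bracket Rp.toLieRep.ρ Tρ) e p q r).1
      = Pop F.toComm.mul F.toLie.bracket e p.1 q.1 r.1 := by
  simp [Pop, semi_apply]

/-- The `V`-component of `P` on the semidirect product, in terms of the operators `R` and `S`. -/
theorem Pop_semi_snd {Tμ Tρ : V →ₗ[K] A →ₗ[K] V}
    (hμ : ∀ {a b : G} {v : V} {x : A}, v ∈ 𝒱 a → x ∈ 𝒜 b →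
      Tμ v x = ε.ε a b • Rp.toCommRep.μ x v)
    (hρ : ∀ {a b : G} {v : V} {x : A}, v ∈ 𝒱 a → x ∈ 𝒜 b →
      Tρ v x = -(ε.ε a b • Rp.toLieRep.ρ x v))
    {a b c : G} {x y z : A} {u v w : V} (hx : x ∈ 𝒜 a) (hy : y ∈ 𝒜 b) (hz : z ∈ 𝒜 c)
    (hu : u ∈ 𝒱 a) (hv : v ∈ 𝒱 b) :
    (Pop (semi F.toComm.mul Rp.toCommRep.μ Tμ) (semi F.toLie.bracket Rp.toLieRep.ρ Tρ)
      (ε.ε a b) (x, u) (y, v) (z, w)).2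
      = Rop Rp.toLieRep.ρ Rp.toCommRep.μ F.toLie.bracket (ε.ε a b) x y w
        + ε.ε b c • Rop Rp.toLieRep.ρ Rp.toCommRep.μ F.toLie.bracket (ε.ε a c) x z v
        + ε.ε a (b + c) •
          Sop Rp.toLieRep.ρ Rp.toCommRep.μ F.toComm.mul (ε.ε b c) y z u := by
  have hxv : Rp.toLieRep.ρ x v ∈ 𝒱 (a + b) := add_comm b a ▸ Rp.toLieRep.grade hv hx
  have hyu : Rp.toLieRep.ρ y u ∈ 𝒱 (a + b) := Rp.toLieRep.grade hu hy
  simp only [Pop, Rop, Sop, semi_apply, Prod.snd_sub, Prod.smul_snd, map_add, map_neg, map_smul,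
    LinearMap.add_apply, LinearMap.neg_apply, LinearMap.smul_apply, LinearMap.sub_apply,
    Module.End.mul_apply, hμ hxv hz, hμ hyu hz, hμ hv hz, hρ hu hy, hρ hu hz,
    hρ hu (F.toComm.grade hy hz), hμ hv (F.toLie.grade hx hz), ε.add_left, ε.add_right, ε.eq_inv b a]
  have hab := ε.ne_zero a b
  match_scalars <;> field_simp

end

end Semidirect

section Theorems

variable {K G A V : Type*} [Field K] [CharZero K] [AddCommGroup G]
  [AddCommGroup A] [Module K A] [AddCommGroup V] [Module K V]

theorem semidirect_fManColorAlgebra [DecidableEq G]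
    (ε : SkewBicharacter G K) (𝒜 : G → Submodule K A) (𝒱 : G → Submodule K V)
    (hA : DirectSum.IsInternal 𝒜) (hV : DirectSum.IsInternal 𝒱)
    (F : FManColorAlgebra ε 𝒜) (Rp : FManColorRep ε F 𝒱) :
    ∃ FAV : FManColorAlgebra (A := A × V) ε (fun g => (𝒜 g).prod (𝒱 g)),
      (∀ {a b : G} {x1 x2 : A} {v1 v2 : V},
        x1 ∈ 𝒜 a → v1 ∈ 𝒱 a → x2 ∈ 𝒜 b → v2 ∈ 𝒱 b →
        FAV.toComm.mul (x1, v1) (x2, v2)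
          = (F.toComm.mul x1 x2,
             Rp.toCommRep.μ x1 v2 + ε.ε a b • Rp.toCommRep.μ x2 v1)) ∧
      (∀ {a b : G} {x1 x2 : A} {v1 v2 : V},
        x1 ∈ 𝒜 a → v1 ∈ 𝒱 a → x2 ∈ 𝒜 b → v2 ∈ 𝒱 b →
        FAV.toLie.bracket (x1, v1) (x2, v2)
          = (F.toLie.bracket x1 x2,
             Rp.toLieRep.ρ x1 v2 - ε.ε a b • Rp.toLieRep.ρ x2 v1)) := by
  obtain ⟨Tμ, hμ⟩ := exists_twist ε 𝒜 𝒱 hA hV Rp.toCommRep.μ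
  obtain ⟨T, hT⟩ := exists_twist ε 𝒜 𝒱 hA hV Rp.toLieRep.ρ
  obtain ⟨Tρ, hρ⟩ : ∃ Tρ : V →ₗ[K] A →ₗ[K] V, ∀ {a b : G} {v : V} {x : A},
      v ∈ 𝒱 a → x ∈ 𝒜 b → Tρ v x = -(ε.ε a b • Rp.toLieRep.ρ x v) :=
    ⟨-T, fun hv hx => by simp [hT hv hx]⟩
  have gμ : ∀ {a b : G} {v : V} {x : A}, x ∈ 𝒜 a → v ∈ 𝒱 b →
      Rp.toCommRep.μ x v ∈ 𝒱 (a + b) := fun {a b} _ _ hx hv =>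
    add_comm b a ▸ Rp.toCommRep.grade hv hx
  have gρ : ∀ {a b : G} {v : V} {x : A}, x ∈ 𝒜 a → v ∈ 𝒱 b →
      Rp.toLieRep.ρ x v ∈ 𝒱 (a + b) := fun {a b} _ _ hx hv =>
    add_comm b a ▸ Rp.toLieRep.grade hv hx
  have gmul : ∀ {a b : G} {p q : A × V}, p ∈ (𝒜 a).prod (𝒱 a) → q ∈ (𝒜 b).prod (𝒱 b) →
      semi F.toComm.mul Rp.toCommRep.μ Tμ p q ∈ (𝒜 (a + b)).prod (𝒱 (a + b)) := by
    rintro a b ⟨x, u⟩ ⟨y, v⟩ h1 h2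
    obtain ⟨hx, hu⟩ : x ∈ 𝒜 a ∧ u ∈ 𝒱 a := h1
    obtain ⟨hy, hv⟩ : y ∈ 𝒜 b ∧ v ∈ 𝒱 b := h2
    refine ⟨F.toComm.grade hx hy, add_mem (gμ hx hv) ?_⟩
    simp only [hμ hu hy]
    exact Submodule.smul_mem _ _ (Rp.toCommRep.grade hu hy)
  have μcomm : ∀ {a b : G} {x y : A}, x ∈ 𝒜 a → y ∈ 𝒜 b → ∀ v : V,
      Rp.toCommRep.μ x (Rp.toCommRep.μ y v)
        = ε.ε a b • Rp.toCommRep.μ y (Rp.toCommRep.μ x v) := by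
    intro a b x y hx hy v
    have h := congrArg (fun t => Rp.toCommRep.μ t v) (F.toComm.comm hx hy)
    simpa [Rp.toCommRep.map_mul] using h
  let C : CommColorAlgebra (A := A × V) ε (fun g => (𝒜 g).prod (𝒱 g)) :=
    { mul := semi F.toComm.mul Rp.toCommRep.μ Tμ
      grade := gmul
      comm := by
        rintro a b ⟨x, u⟩ ⟨y, v⟩ h1 h2
        obtain ⟨hx, hu⟩ : x ∈ 𝒜 a ∧ u ∈ 𝒱 a := h1
        obtain ⟨hy, hv⟩ : y ∈ 𝒜 b ∧ v ∈ 𝒱 b := h2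
        refine Prod.ext (F.toComm.comm hx hy) ?_
        simp only [semi_apply, Prod.smul_snd, hμ hu hy, hμ hv hx, smul_add, smul_smul,
          ε.mul_symm, one_smul]
        abel
      assoc := by
        intro p q r
        induction p using prod_induction hA hV with
        | hadd p q hp hq => simp only [map_add, LinearMap.add_apply, hp, hq]
        | hom a x u hx hu =>
        induction q using prod_induction hA hV with
        | hadd p q hp hq => simp only [map_add, LinearMap.add_apply, hp, hq]
        | hom b y v hy hv =>
        induction r using prod_induction hA hV with
        | hadd p q hp hq => simp only [map_add, hp, hq]
        | hom c z w hz hw =>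
        refine Prod.ext (F.toComm.assoc x y z) ?_
        simp only [semi_apply, hμ hu hy, hμ hv hz, hμ hu (F.toComm.grade hy hz), map_add,
          map_smul, LinearMap.add_apply, LinearMap.smul_apply, hμ (gμ hx hv) hz,
          hμ (Rp.toCommRep.grade hu hy) hz, Rp.toCommRep.map_mul, Module.End.mul_apply,
          ε.add_left, ε.add_right, μcomm hy hz u, μcomm hx hz v]
        module }
  let L : LieColorAlgebra (A := A × V) ε (fun g => (𝒜 g).prod (𝒱 g)) :=
    { bracket := semi F.toLie.bracket Rp.toLieRep.ρ Tρ
      grade := by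
        rintro a b ⟨x, u⟩ ⟨y, v⟩ h1 h2
        obtain ⟨hx, hu⟩ : x ∈ 𝒜 a ∧ u ∈ 𝒱 a := h1
        obtain ⟨hy, hv⟩ : y ∈ 𝒜 b ∧ v ∈ 𝒱 b := h2
        refine ⟨F.toLie.grade hx hy, add_mem (gρ hx hv) ?_⟩
        simp only [hρ hu hy]
        exact neg_mem (Submodule.smul_mem _ _ (Rp.toLieRep.grade hu hy))
      skew := by
        rintro a b ⟨x, u⟩ ⟨y, v⟩ h1 h2
        obtain ⟨hx, hu⟩ : x ∈ 𝒜 a ∧ u ∈ 𝒱 a := h1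
        obtain ⟨hy, hv⟩ : y ∈ 𝒜 b ∧ v ∈ 𝒱 b := h2
        refine Prod.ext (F.toLie.skew hx hy) ?_
        simp only [semi_apply, Prod.smul_snd, Prod.snd_neg, hρ hu hy, hρ hv hx, smul_add,
          smul_neg, smul_smul, ε.mul_symm, one_smul]
        abel
      jacobi := by
        rintro a b c ⟨x, u⟩ ⟨y, v⟩ ⟨z, w⟩ h1 h2 h3
        obtain ⟨hx, hu⟩ : x ∈ 𝒜 a ∧ u ∈ 𝒱 a := h1
        obtain ⟨hy, hv⟩ : y ∈ 𝒜 b ∧ v ∈ 𝒱 b := h2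
        obtain ⟨hz, hw⟩ : z ∈ 𝒜 c ∧ w ∈ 𝒱 c := h3
        refine Prod.ext (F.toLie.jacobi hx hy hz) ?_
        simp only [semi_apply, Prod.snd_add, Prod.smul_snd, Prod.snd_zero,
          hρ hu hy, hρ hv hz, hρ hw hx, hρ hu (F.toLie.grade hy hz),
          hρ hv (F.toLie.grade hz hx), hρ hw (F.toLie.grade hx hy),
          Rp.toLieRep.map_bracket hx hy, Rp.toLieRep.map_bracket hy hz,
          Rp.toLieRep.map_bracket hz hx, map_add, map_neg, map_smul,
          LinearMap.sub_apply, LinearMap.smul_apply, Module.End.mul_apply, ε.add_right]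
        -- The six values of `ε` reduce to three invertible ones, one for each pair of degrees.
        have := ε.ne_zero a b
        have := ε.ne_zero b c
        have := ε.ne_zero c a
        rw [ε.eq_inv b a, ε.eq_inv c b, ε.eq_inv a c]
        match_scalars <;> field_simp <;> ring }
  refine ⟨⟨C, L, ?_⟩, ?_, ?_⟩
  · rintro a b c d ⟨x, u⟩ ⟨y, v⟩ ⟨z, w⟩ ⟨t, s⟩ h1 h2 h3 h4
    obtain ⟨hx, hu⟩ : x ∈ 𝒜 a ∧ u ∈ 𝒱 a := h1
    obtain ⟨hy, hv⟩ : y ∈ 𝒜 b ∧ v ∈ 𝒱 b := h2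
    obtain ⟨hz, hw⟩ : z ∈ 𝒜 c ∧ w ∈ 𝒱 c := h3
    obtain ⟨ht, hs⟩ : t ∈ 𝒜 d ∧ s ∈ 𝒱 d := h4
    dsimp only [C, L]
    have hxy := F.toComm.grade hx hy
    have hxyV : Rp.toCommRep.μ x v + Tμ u y ∈ 𝒱 (a + b) :=
      (gmul (p := (x, u)) (q := (y, v)) ⟨hx, hu⟩ ⟨hy, hv⟩).2
    refine Prod.ext ?_ ?_
    · simpa only [Pop_semi_fst, semi_apply, Prod.fst_add, Prod.smul_fst] using
        F.hertling_manin hx hy hz ht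
    · have hP₁ := Pop_semi_snd F Rp hμ hρ (w := s) hxy hz ht hxyV hw
      have hP₂ := Pop_semi_snd F Rp hμ hρ (w := s) hy hz ht hv hw
      have hP₃ := Pop_semi_snd F Rp hμ hρ (w := s) hx hz ht hu hw
      have hRs := congrArg (fun f => f s) (Rp.rel_R hx hy hz)
      have hRw := congrArg (fun f => f w) (Rp.rel_R hx hy ht)
      have hSu := congrArg (fun f => f u) (Rp.rel_S hy hz ht)
      have hSv := congrArg (fun f => f v) (Rp.rel_S hx hz ht)
      have e₁ := hμ hu (Pop_mem F hy hz ht (ε.ε b c))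
      have e₂ := hμ hv (Pop_mem F hx hz ht (ε.ε a c))
      -- The coefficient of `μ(P_x(z, t)) v` contains `ε(a, b) ε(b, a)`, which cancels.
      have hab := ε.ne_zero a b
      simp only [LinearMap.add_apply, LinearMap.sub_apply, LinearMap.smul_apply,
        Module.End.mul_apply] at hRs hRw hSu hSv
      rw [semi_apply _ _ _ (x, u) (y, v), hP₁]
      rw [semi_apply _ _ _ (x, u), semi_apply _ _ _ (y, v)]
      simp only [Prod.snd_add, Prod.smul_snd, Pop_semi_fst, hP₂, hP₃, e₁, e₂, hRs, hRw, hSu, hSv,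
        hμ hu hy, map_add, map_smul]
      simp only [ε.add_left, ε.add_right, ε.eq_inv b a]
      match_scalars <;> field_simp <;> ring
  · intro a b x1 x2 v1 v2 hx1 hv1 hx2 hv2
    simp only [C, semi_apply, hμ hv1 hx2]
  · intro a b x1 x2 v1 v2 hx1 hv1 hx2 hv2
    simp only [L, semi_apply, hρ hv1 hx2, sub_eq_add_neg]

end Theorems
end

section
/- Let (A, ·, [ , ], ε) be an F-manifold color algebra, (V, ρ, μ) a representation of it, and equip A ⊕ V with the operations [x1+v1, x2+v2]_ρ = [x1,x2] + ρ(x1)v2 − ε(x1,x2)ρ(x2)v1 and (x1+v1)·_μ(x2+v2) = x1·x2 + μ(x1)v2 + ε(x1,x2)μ(x2)v1. Then for all homogeneous elements x1+v1, x2+v2, x3+v3 ∈ A ⊕ V (with x_i and v_i of the same degree): P_{x1+v1}(x2+v2, x3+v3) = P_{x1}(x2,x3) + R(x1,x2)v3 + ε(x2,x3)R(x1,x3)v2 + ε(x1,x2+x3)S(x2,x3)v1, where on the left P is formed from ·_μ and [ , ]_ρ, on the right P is formed from · and [ , ], R(x1,x2) = ρ(x1)μ(x2) − ε(x1,x2)μ(x2)ρ(x1)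 − μ([x1,x2]) and S(x1,x2) = μ(x1)ρ(x2) + ε(x1,x2)μ(x2)ρ(x1) − ρ(x1·x2). -/
/-!
The `A`-component of the formula is the definition of `P`. For the `V`-component, the sums
`x_i · x_j + …` and `[x_i, x_j] + …` are again homogeneous, so the formulas for the product and
bracket on `A ⊕ V` apply twice; expanding by linearity and collecting the terms in `v1`, `v2`,
`v3` leaves identities between scalars, which follow from bimultiplicativity of `ε` and
`ε(a,b)ε(b,a) = 1`.
-/

open Module

set_option synthInstance.maxHeartbeats 1000000
set_option maxHeartbeats 1000000

section Theorems

variable {K G A V : Type*} [Field K] [CharZero K] [AddCommGroup G]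
  [AddCommGroup A] [Module K A] [AddCommGroup V] [Module K V]

theorem semidirect_P_formula
    (ε : SkewBicharacter G K) (𝒜 : G → Submodule K A) (𝒱 : G → Submodule K V)
    (F : FManColorAlgebra ε 𝒜) (Rp : FManColorRep ε F 𝒱)
    (mulAV bracketAV : A × V →ₗ[K] A × V →ₗ[K] A × V)
    (hmul : ∀ {a b : G} {x1 x2 : A} {v1 v2 : V},
      x1 ∈ 𝒜 a → v1 ∈ 𝒱 a → x2 ∈ 𝒜 b → v2 ∈ 𝒱 b →
      mulAV (x1, v1) (x2, v2)
        = (F.toComm.mul x1 x2, Rp.toCommRep.μ x1 v2 + ε.ε a b • Rp.toCommRep.μ x2 v1))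
    (hbr : ∀ {a b : G} {x1 x2 : A} {v1 v2 : V},
      x1 ∈ 𝒜 a → v1 ∈ 𝒱 a → x2 ∈ 𝒜 b → v2 ∈ 𝒱 b →
      bracketAV (x1, v1) (x2, v2)
        = (F.toLie.bracket x1 x2, Rp.toLieRep.ρ x1 v2 - ε.ε a b • Rp.toLieRep.ρ x2 v1))
    {a b c : G} {x1 x2 x3 : A} {v1 v2 v3 : V}
    (h1 : x1 ∈ 𝒜 a) (hv1 : v1 ∈ 𝒱 a) (h2 : x2 ∈ 𝒜 b) (hv2 : v2 ∈ 𝒱 b)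
    (h3 : x3 ∈ 𝒜 c) (hv3 : v3 ∈ 𝒱 c) :
    Pop mulAV bracketAV (ε.ε a b) (x1, v1) (x2, v2) (x3, v3)
      = (Pop F.toComm.mul F.toLie.bracket (ε.ε a b) x1 x2 x3,
         Rop Rp.toLieRep.ρ Rp.toCommRep.μ F.toLie.bracket (ε.ε a b) x1 x2 v3
           + ε.ε b c • Rop Rp.toLieRep.ρ Rp.toCommRep.μ F.toLie.bracket (ε.ε a c) x1 x3 v2
           + ε.ε a (b + c) • Sop Rp.toLieRep.ρ Rp.toCommRep.μ F.toComm.mul (ε.ε b c) x2 x3 v1) := by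
  have hm : ∀ {p q : G} {x y : A} {v w : V}, x ∈ 𝒜 p → v ∈ 𝒱 p → y ∈ 𝒜 q → w ∈ 𝒱 q →
      Rp.toCommRep.μ x w + ε.ε p q • Rp.toCommRep.μ y v ∈ 𝒱 (p + q) := fun {p q} _ _ _ _ hx hv hy hw =>
    add_mem (add_comm q p ▸ Rp.toCommRep.grade hw hx)
      (Submodule.smul_mem _ _ (Rp.toCommRep.grade hv hy))
  have hb : ∀ {p q : G} {x y : A} {v w : V}, x ∈ 𝒜 p → v ∈ 𝒱 p → y ∈ 𝒜 q → w ∈ 𝒱 q →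
      Rp.toLieRep.ρ x w - ε.ε p q • Rp.toLieRep.ρ y v ∈ 𝒱 (p + q) := fun {p q} _ _ _ _ hx hv hy hw =>
    sub_mem (add_comm q p ▸ Rp.toLieRep.grade hw hx)
      (Submodule.smul_mem _ _ (Rp.toLieRep.grade hv hy))
  unfold Pop
  rw [hmul h2 hv2 h3 hv3, hbr h1 hv1 h2 hv2, hbr h1 hv1 h3 hv3,
    hbr h1 hv1 (F.toComm.grade h2 h3) (hm h2 hv2 h3 hv3),
    hmul (F.toLie.grade h1 h2) (hb h1 hv1 h2 hv2) h3 hv3,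
    hmul h2 hv2 (F.toLie.grade h1 h3) (hb h1 hv1 h3 hv3)]
  refine Prod.ext rfl ?_
  -- The coefficient of `μ([x1,x3])v2` is `ε(a,b)ε(b,a+c)`, which collapses to `ε(b,c)`.
  have key : ε.ε a b * ε.ε b (a + c) = ε.ε b c := by
    rw [ε.add_right, ← mul_assoc, ε.mul_symm, one_mul]
  simp only [Prod.snd_sub, Prod.smul_snd, Rop, Sop, LinearMap.sub_apply, LinearMap.add_apply,
    LinearMap.smul_apply, Module.End.mul_apply, map_add, map_sub, map_smul, smul_add, smul_sub,
    smul_smul, key, ε.add_left, ε.add_right a b c]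
  module

end Theorems
end

section
/- Let (A, ·, [ , ], ε) be an F-manifold color algebra and 𝔅 a symmetric bilinear form on A satisfying 𝔅(x·y, z) = 𝔅(x, y·z) and 𝔅([x,y], z) = 𝔅(x, [y,z]) for all homogeneous x, y, z ∈ A. Then for all homogeneous x, y, z, w ∈ A: 𝔅(P_x(y,z), w) = ε(x+y, z) 𝔅(z, P_x(y,w)), where P_x(y,z) = [x, y·z] − [x,y]·z − ε(x,y) y·[x,z]. -/
/-!
Invariance together with `ε`-skew-symmetry (resp. `ε`-commutativity) says that `ad x` and
multiplication by `s` have adjoints `B([x,u],v) = -ε(x,u) B(u,[x,v])` and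
`B(s·u,v) = ε(s,u) B(u,s·v)`. Taking adjoints in the three terms of `P_x(y,z)` therefore swaps
the terms `[x, y·z]` and `y·[x,z]` and fixes `[x,y]·z`, and each of them acquires the factor
`ε(x+y,z)` once `ε(x,y) ε(y,x) = 1` is used.
-/

open Module

set_option synthInstance.maxHeartbeats 1000000
set_option maxHeartbeats 1000000

section Theorems

variable {K G A V : Type*} [Field K] [CharZero K] [AddCommGroup G]
  [AddCommGroup A] [Module K A] [AddCommGroup V] [Module K V]

theorem invariant_form_P_adjoint
    (ε : SkewBicharacter G K) (𝒜 : G → Submodule K A) (F : FManColorAlgebra ε 𝒜)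
    (B : A →ₗ[K] A →ₗ[K] K)
    (hsymm : ∀ x y : A, B x y = B y x)
    (hBmul : ∀ {a b c : G} {x y z : A}, x ∈ 𝒜 a → y ∈ 𝒜 b → z ∈ 𝒜 c →
      B (F.toComm.mul x y) z = B x (F.toComm.mul y z))
    (hBbr : ∀ {a b c : G} {x y z : A}, x ∈ 𝒜 a → y ∈ 𝒜 b → z ∈ 𝒜 c →
      B (F.toLie.bracket x y) z = B x (F.toLie.bracket y z))
    {a b c d : G} {x y z w : A}
    (hx : x ∈ 𝒜 a) (hy : y ∈ 𝒜 b) (hz : z ∈ 𝒜 c) (hw : w ∈ 𝒜 d) :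
    B (Pop F.toComm.mul F.toLie.bracket (ε.ε a b) x y z) w
      = ε.ε (a + b) c * B z (Pop F.toComm.mul F.toLie.bracket (ε.ε a b) x y w) := by
  -- Moving `ad x` across the form, by skew-symmetry and invariance of the bracket.
  have had : ∀ {e f : G} {u v : A}, u ∈ 𝒜 e → v ∈ 𝒜 f →
      B (F.toLie.bracket x u) v = -(ε.ε a e * B u (F.toLie.bracket x v)) := by
    intro e f u v hu hv
    rw [F.toLie.skew hx hu]
    simp only [map_neg, map_smul, LinearMap.neg_apply, LinearMap.smul_apply, smul_eq_mul,
      hBbr hu hx hv]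
  -- Moving a multiplication operator across the form, by `ε`-commutativity and invariance.
  have hmul : ∀ {e f g : G} {s u v : A}, s ∈ 𝒜 e → u ∈ 𝒜 f → v ∈ 𝒜 g →
      B (F.toComm.mul s u) v = ε.ε e f * B u (F.toComm.mul s v) := by
    intro e f g s u v hs hu hv
    rw [F.toComm.comm hs hu]
    simp only [map_smul, LinearMap.smul_apply, smul_eq_mul, hBmul hu hs hv]
  have h1 := had (F.toComm.grade hy hz) hw
  have h1' := hmul hy hz (F.toLie.grade hx hw)
  have h2 := hmul (F.toLie.grade hx hy) hz hw
  have h3 := hmul hy (F.toLie.grade hx hz) hw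
  have h3' := had hz (F.toComm.grade hy hw)
  simp only [Pop, map_sub, map_smul, LinearMap.sub_apply, LinearMap.smul_apply, smul_eq_mul]
  rw [h1, h1', h2, h3, h3']
  simp only [ε.add_left, ε.add_right]
  -- The two brackets exchange roles; the leftover factor is `ε(x,y) ε(y,x) = 1`.
  linear_combination (ε.ε b c * ε.ε a c * B z (F.toLie.bracket x (F.toComm.mul y w))) *
    ε.mul_symm a b

end Theorems
end

section
/- Let (A, ·, [ , ], ε) be an F-manifold color algebra and 𝔅 a symmetric bilinear form on A satisfying 𝔅(x·y, z) = 𝔅(x, y·z) and 𝔅([x,y], z) = 𝔅(x, [y,z]) for all homogeneous x, y, z ∈ A. Define T(y,z)(w) = −ε(y,z)[z, y·w] − [y, z·w] + [y·z, w]. Then for all homogeneous y, z, w1, w2 ∈ A: 𝔅(T(y,z)(w1), w2) = ε(y+z, w1+w2) 𝔅(w1, P_{w2}(y,z)), where P_{w2}(y,z) = [w2, y·z] − [w2,y]·z − ε(w2,y) y·[w2,z]. -/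
/-!
Each of the three terms of `T(y,z)(w₁)` is moved across the form separately. Invariance together
with color skew-symmetry (resp. `ε`-commutativity) makes left bracketing (resp. multiplication)
by a homogeneous `u` adjoint, up to a value of `ε`, to bracketing by `u` on the right
(resp. multiplication by `u` on the left). This gives
* `𝔅([y·z, w₁], w₂) = ε(y+z, w₁+w₂) 𝔅(w₁, [w₂, y·z])`,
* `-𝔅([y, z·w₁], w₂) = -ε(y+z, w₁+w₂) 𝔅(w₁, [w₂,y]·z)`,
* `-ε(y,z) 𝔅([z, y·w₁], w₂) = -ε(y+z, w₁+w₂) ε(w₂,y) 𝔅(w₁, y·[w₂,z])`,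
where the values of `ε` left over cancel by `ε(a,b) ε(b,a) = 1`.
-/

open Module

set_option synthInstance.maxHeartbeats 1000000
set_option maxHeartbeats 1000000

section Theorems

variable {K G A V : Type*} [Field K] [CharZero K] [AddCommGroup G]
  [AddCommGroup A] [Module K A] [AddCommGroup V] [Module K V]

/-- Bracketing on the left by a homogeneous `u` is adjoint, up to `ε`, to bracketing on the right. -/
lemma bracket_adjoint (ε : SkewBicharacter G K) (𝒜 : G → Submodule K A)
    (L : LieColorAlgebra ε 𝒜) (B : A →ₗ[K] A →ₗ[K] K)
    (hBbr : ∀ {a b c : G} {x y z : A}, x ∈ 𝒜 a → y ∈ 𝒜 b → z ∈ 𝒜 c →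
      B (L.bracket x y) z = B x (L.bracket y z))
    {a b c : G} {u v w : A} (hu : u ∈ 𝒜 a) (hv : v ∈ 𝒜 b) (hw : w ∈ 𝒜 c) :
    B (L.bracket u v) w = ε.ε a b * ε.ε a c * B v (L.bracket w u) := by
  rw [L.skew hu hv, map_neg, map_smul, LinearMap.neg_apply, LinearMap.smul_apply,
    hBbr hv hu hw, L.skew hu hw, map_neg, map_smul]
  simp only [smul_eq_mul]
  ring

/-- Multiplication on the left by a homogeneous `u` is self-adjoint up to `ε`. -/
lemma mul_adjoint (ε : SkewBicharacter G K) (𝒜 : G → Submodule K A)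
    (C : CommColorAlgebra ε 𝒜) (B : A →ₗ[K] A →ₗ[K] K)
    (hBmul : ∀ {a b c : G} {x y z : A}, x ∈ 𝒜 a → y ∈ 𝒜 b → z ∈ 𝒜 c →
      B (C.mul x y) z = B x (C.mul y z))
    {a b c : G} {u v w : A} (hu : u ∈ 𝒜 a) (hv : v ∈ 𝒜 b) (hw : w ∈ 𝒜 c) :
    B (C.mul u v) w = ε.ε a b * B v (C.mul u w) := by
  rw [C.comm hu hv, map_smul, LinearMap.smul_apply, hBmul hv hu hw, smul_eq_mul]

theorem invariant_form_T_adjoint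
    (ε : SkewBicharacter G K) (𝒜 : G → Submodule K A) (F : FManColorAlgebra ε 𝒜)
    (B : A →ₗ[K] A →ₗ[K] K)
    (hsymm : ∀ x y : A, B x y = B y x)
    (hBmul : ∀ {a b c : G} {x y z : A}, x ∈ 𝒜 a → y ∈ 𝒜 b → z ∈ 𝒜 c →
      B (F.toComm.mul x y) z = B x (F.toComm.mul y z))
    (hBbr : ∀ {a b c : G} {x y z : A}, x ∈ 𝒜 a → y ∈ 𝒜 b → z ∈ 𝒜 c →
      B (F.toLie.bracket x y) z = B x (F.toLie.bracket y z))
    {b c d1 d2 : G} {y z w1 w2 : A}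
    (hy : y ∈ 𝒜 b) (hz : z ∈ 𝒜 c) (hw1 : w1 ∈ 𝒜 d1) (hw2 : w2 ∈ 𝒜 d2) :
    B (TopA F.toComm.mul F.toLie.bracket (ε.ε b c) y z w1) w2
      = ε.ε (b + c) (d1 + d2) * B w1 (Pop F.toComm.mul F.toLie.bracket (ε.ε d2 b) w2 y z) := by
  have h1 := bracket_adjoint ε 𝒜 F.toLie B hBbr (F.toComm.grade hy hz) hw1 hw2
  have h2 := bracket_adjoint ε 𝒜 F.toLie B hBbr hy (F.toComm.grade hz hw1) hw2
  rw [mul_adjoint ε 𝒜 F.toComm B hBmul hz hw1 (F.toLie.grade hw2 hy),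
    F.toComm.comm hz (F.toLie.grade hw2 hy), map_smul, smul_eq_mul] at h2
  have h3 := bracket_adjoint ε 𝒜 F.toLie B hBbr hz (F.toComm.grade hy hw1) hw2
  rw [mul_adjoint ε 𝒜 F.toComm B hBmul hy hw1 (F.toLie.grade hw2 hz)] at h3
  simp only [TopA, Pop, map_add, map_sub, map_neg, map_smul, LinearMap.add_apply,
    LinearMap.sub_apply, LinearMap.neg_apply, LinearMap.smul_apply, smul_eq_mul, h1, h2, h3,
    ε.add_left, ε.add_right]
  have hbc := ε.mul_symm b c
  have hbd := ε.mul_symm b d2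
  generalize B w1 (F.toLie.bracket w2 (F.toComm.mul y z)) = X
  generalize B w1 (F.toComm.mul (F.toLie.bracket w2 y) z) = Y
  generalize B w1 (F.toComm.mul y (F.toLie.bracket w2 z)) = Z
  -- `hbc` cancels `ε(y,z) ε(z,y)` in the `Y` and `Z` terms, `hbd` cancels `ε(y,w₂) ε(w₂,y)`
  -- in the `Z` term.
  linear_combination
    (-(ε.ε b d1 * ε.ε b d2 * ε.ε c d1 * ε.ε c d2 * Y)
      - ε.ε b d1 * ε.ε c d1 * ε.ε c d2 * Z) * hbc
    + (ε.ε b d1 * ε.ε c d1 * ε.ε c d2 * Z) * hbd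

end Theorems
end

section
/- Let (A, ⋄, ε) be a Zinbiel color algebra and define x·y = x⋄y + ε(x,y) y⋄x on homogeneous elements (extended bilinearly), and 𝔏 : A → gl(A) by 𝔏_x y = x⋄y. Then (A, ·, ε) is an ε-commutative associative algebra and (A, 𝔏) is a representation of (A, ·, ε). -/
/-!
The Zinbiel identity says exactly that `(x · y) ⋄ z = x ⋄ (y ⋄ z)` on homogeneous elements, hence
everywhere by linearity (`dia_m` below): this is the representation property. Combined with the
ε-commutativity of `·`, it gives `x ⋄ (y ⋄ z) = ε(x, y) y ⋄ (x ⋄ z)` (`dia_swap`), from which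
associativity follows: both `(x · y) · z` and `x · (y · z)` expand into three terms of the form
`u ⋄ (v ⋄ w)`, which agree up to such swaps.

The product `·` is only prescribed on homogeneous elements; its bilinear extension is built from
the inverse of the sum map `⨁ a, 𝒜 a → A` (`colorFlip`).
-/

open Module

set_option synthInstance.maxHeartbeats 1000000
set_option maxHeartbeats 1000000

section Helpers

variable {K G A : Type*} [Field K] [AddCommGroup G] [AddCommGroup A] [Module K A]

/-- In an internally graded space, an additive property holds everywhere as soon as it holds on
homogeneous elements. -/
theorem homogeneous_induction [DecidableEq G] {𝒜 : G → Submodule K A}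
    (hA : DirectSum.IsInternal 𝒜) {p : A → Prop}
    (hom : ∀ a, ∀ x ∈ 𝒜 a, p x) (add : ∀ x y, p x → p y → p (x + y)) (x : A) : p x := by
  have hx : x ∈ ⨆ a, 𝒜 a := by
    rw [hA.submodule_iSup_eq_top]
    exact Submodule.mem_top
  exact Submodule.iSup_induction 𝒜 (motive := p) hx hom (hom 0 0 (zero_mem _)) add

/-- The linear inverse of the sum map `⨁ a, 𝒜 a → A`. -/
noncomputable def decomp [DecidableEq G] {𝒜 : G → Submodule K A}
    (hA : DirectSum.IsInternal 𝒜) : A →ₗ[K] DirectSum G fun a => 𝒜 a :=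
  (LinearEquiv.ofBijective (DirectSum.coeLinearMap 𝒜) hA).symm.toLinearMap

theorem decomp_of_mem [DecidableEq G] {𝒜 : G → Submodule K A}
    (hA : DirectSum.IsInternal 𝒜) {a : G} {x : A} (hx : x ∈ 𝒜 a) :
    decomp hA x = DirectSum.lof K G (fun a => 𝒜 a) a ⟨x, hx⟩ := by
  unfold decomp
  rw [LinearEquiv.coe_coe, LinearEquiv.symm_apply_eq]
  exact (DirectSum.coeLinearMap_lof 𝒜 a ⟨x, hx⟩).symm

/-- The operator scaling each component `A_b` by `ε(a, b)`. -/
noncomputable def twist [DecidableEq G] (ε : SkewBicharacter G K) {𝒜 : G → Submodule K A}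
    (hA : DirectSum.IsInternal 𝒜) (a : G) : A →ₗ[K] A :=
  (DirectSum.toModule K G A fun b => ε.ε a b • (𝒜 b).subtype) ∘ₗ decomp hA

theorem twist_of_mem [DecidableEq G] (ε : SkewBicharacter G K) {𝒜 : G → Submodule K A}
    (hA : DirectSum.IsInternal 𝒜) (a : G) {b : G} {y : A} (hy : y ∈ 𝒜 b) :
    twist ε hA a y = ε.ε a b • y := by
  simp [twist, decomp_of_mem hA hy]

/-- The bilinear extension of `(x, y) ↦ ε(x, y) y ⋄ x` from homogeneous elements. -/
noncomputable def colorFlip [DecidableEq G] (ε : SkewBicharacter G K) {𝒜 : G → Submodule K A}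
    (hA : DirectSum.IsInternal 𝒜) (dia : A →ₗ[K] A →ₗ[K] A) : A →ₗ[K] A →ₗ[K] A :=
  (DirectSum.toModule K G (A →ₗ[K] A) fun a =>
    (dia ∘ₗ twist ε hA a).flip ∘ₗ (𝒜 a).subtype) ∘ₗ decomp hA

theorem colorFlip_of_mem [DecidableEq G] (ε : SkewBicharacter G K) {𝒜 : G → Submodule K A}
    (hA : DirectSum.IsInternal 𝒜) (dia : A →ₗ[K] A →ₗ[K] A) {a b : G} {x y : A}
    (hx : x ∈ 𝒜 a) (hy : y ∈ 𝒜 b) :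
    colorFlip ε hA dia x y = ε.ε a b • dia y x := by
  simp [colorFlip, decomp_of_mem hA hx, twist_of_mem ε hA a hy]

end Helpers

section Theorems

variable {K G A V : Type*} [Field K] [CharZero K] [AddCommGroup G]
  [AddCommGroup A] [Module K A] [AddCommGroup V] [Module K V]

theorem zinbielColor_to_commColor [DecidableEq G]
    (ε : SkewBicharacter G K) (𝒜 : G → Submodule K A) (hA : DirectSum.IsInternal 𝒜)
    (Z : ZinbielColorAlgebra ε 𝒜) :
    ∃ C : CommColorAlgebra ε 𝒜,
      (∀ {a b : G} {x y : A}, x ∈ 𝒜 a → y ∈ 𝒜 b →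
        C.mul x y = Z.dia x y + ε.ε a b • Z.dia y x) ∧
      ∃ M : CommColorRep ε C 𝒜, M.μ = Z.dia := by
  set m : A →ₗ[K] A →ₗ[K] A := Z.dia + colorFlip ε hA Z.dia with hm
  have m_apply : ∀ {a b : G} {x y : A}, x ∈ 𝒜 a → y ∈ 𝒜 b →
      m x y = Z.dia x y + ε.ε a b • Z.dia y x := by
    intro a b x y hx hy
    simp [hm, colorFlip_of_mem ε hA Z.dia hx hy]
  have m_grade : ∀ {a b : G} {x y : A}, x ∈ 𝒜 a → y ∈ 𝒜 b → m x y ∈ 𝒜 (a + b) := by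
    intro a b x y hx hy
    rw [m_apply hx hy]
    exact add_mem (Z.grade hx hy) (Submodule.smul_mem _ _ (add_comm b a ▸ Z.grade hy hx))
  have m_comm : ∀ {a b : G} {x y : A}, x ∈ 𝒜 a → y ∈ 𝒜 b → m x y = ε.ε a b • m y x := by
    intro a b x y hx hy
    rw [m_apply hx hy, m_apply hy hx, smul_add, smul_smul, ε.mul_symm, one_smul, add_comm]
  have dia_m : ∀ x y z : A, Z.dia (m x y) z = Z.dia x (Z.dia y z) := by
    intro x y z
    induction x using homogeneous_induction hA with
    | add x x' h h' => simp only [map_add, LinearMap.add_apply, h, h']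
    | hom a x hx =>
    induction y using homogeneous_induction hA with
    | add y y' h h' => simp only [map_add, LinearMap.add_apply, h, h']
    | hom b y hy =>
    induction z using homogeneous_induction hA with
    | add z z' h h' => simp only [map_add, h, h']
    | hom c z hz =>
    rw [Z.zinbiel hx hy hz, m_apply hx hy]
    simp
  -- Since `x ⋄ (y ⋄ z) = (x · y) ⋄ z`, ε-commutativity of `·` swaps the two left factors.
  have dia_swap : ∀ {a b : G} {x y : A} (z : A), x ∈ 𝒜 a → y ∈ 𝒜 b →
      Z.dia x (Z.dia y z) = ε.ε a b • Z.dia y (Z.dia x z) := by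
    intro a b x y z hx hy
    rw [← dia_m, ← dia_m, m_comm hx hy, map_smul, LinearMap.smul_apply]
  have m_assoc : ∀ x y z : A, m (m x y) z = m x (m y z) := by
    intro x y z
    induction x using homogeneous_induction hA with
    | add x x' h h' => simp only [map_add, LinearMap.add_apply, h, h']
    | hom a x hx =>
    induction y using homogeneous_induction hA with
    | add y y' h h' => simp only [map_add, LinearMap.add_apply, h, h']
    | hom b y hy =>
    induction z using homogeneous_induction hA with
    | add z z' h h' => simp only [map_add, h, h']
    | hom c z hz =>
    rw [m_apply (m_grade hx hy) hz, m_apply hx (m_grade hy hz), dia_m, dia_m,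
      m_apply hx hy, m_apply hy hz, ε.add_left, ε.add_right]
    simp only [map_add, map_smul]
    rw [dia_swap y hx hz, dia_swap x hy hz]
    module
  exact ⟨⟨m, m_grade, m_comm, m_assoc⟩, m_apply,
    ⟨Z.dia, fun {a b} _ _ hv hx => add_comm b a ▸ Z.grade hx hv, fun x y => LinearMap.ext (dia_m x y)⟩, rfl⟩

end Theorems
end

section
/- Let (A, ⋄, ∗, ε) be a pre-F-manifold color algebra, and define x·y = x⋄y + ε(x,y) y⋄x and [x,y] = x∗y − ε(x,y) y∗x on homogeneous elements (extended bilinearly). Then (A, ·, [ , ], ε) is an F-manifold color algebra. -/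
/-!
The twisted flips `(x, y) ↦ ε(x,y) y⋄x` and `(x, y) ↦ ε(x,y) y∗x` extend bilinearly from homogeneous
elements because the grading is a direct sum decomposition (`exists_twistedFlip`); this gives
globally defined bilinear operations `·` and `[ , ]`.

Associativity of `·` follows by rewriting every `x⋄(y⋄z)` with the Zinbiel identity, and the color
Jacobi identity is a combination of three instances of the pre-Lie identity.

For the Hertling–Manin relation, the key fact (`Pop_eq`) is
`P_x(y,z) = F1(x,y,z) + ε(y,z) F1(x,z,y) + ε(x,y+z) F2(y,z,x)`,
so that the second axiom of a pre-`F`-manifold color algebra computes `P_x(y,z) ⋄ w`. Expanding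
`x·P_y(z,w) + ε(x,y) y·P_x(z,w)` through `⋄`, the terms `x⋄F2(z,w,y)` and `y⋄F2(z,w,x)` cancel, the
terms `F2(z,w,x⋄y)` and `F2(z,w,y⋄x)` assemble to `F2(z,w,x·y)`, and the remaining terms are
`F1(x·y,z,w) + ε(z,w) F1(x·y,w,z)` by the first axiom. The total is `P_{x·y}(z,w)`.
-/

open Module

set_option synthInstance.maxHeartbeats 1000000
set_option maxHeartbeats 1000000

section Induced

variable {K G A : Type*} [Field K] [AddCommGroup G] [AddCommGroup A] [Module K A]

theorem SkewBicharacter.swap_eq_inv (ε : SkewBicharacter G K) (a b : G) :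
    ε.ε b a = (ε.ε a b)⁻¹ :=
  eq_inv_of_mul_eq_one_right (ε.mul_symm a b)

theorem exists_twistedFlip [DecidableEq G] (ε : SkewBicharacter G K) (𝒜 : G → Submodule K A)
    (hA : DirectSum.IsInternal 𝒜) (m : A →ₗ[K] A →ₗ[K] A) :
    ∃ t : A →ₗ[K] A →ₗ[K] A, ∀ {a b : G} {x y : A}, x ∈ 𝒜 a → y ∈ 𝒜 b →
      t x y = ε.ε a b • m y x := by
  let e := LinearEquiv.ofBijective (DirectSum.coeLinearMap 𝒜) hA
  have he : ∀ {a : G} {x : A} (hx : x ∈ 𝒜 a),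
      e.symm x = DirectSum.lof K G (fun i => 𝒜 i) a ⟨x, hx⟩ := by
    intro a x hx
    rw [LinearEquiv.symm_apply_eq]
    exact (DirectSum.coeLinearMap_lof 𝒜 a ⟨x, hx⟩).symm
  -- `s a` multiplies the component of degree `b` by `ε a b`.
  let s : G → A →ₗ[K] A := fun a =>
    DirectSum.toModule K G A (fun b => ε.ε a b • (𝒜 b).subtype) ∘ₗ e.symm.toLinearMap
  have hs : ∀ (a : G) {b : G} {y : A}, y ∈ 𝒜 b → s a y = ε.ε a b • y := by
    intro a b y hy
    simp [s, he hy, DirectSum.toModule_lof]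
  refine ⟨DirectSum.toModule K G (A →ₗ[K] A)
    (fun a => LinearMap.lcomp K A (s a) ∘ₗ m.flip ∘ₗ (𝒜 a).subtype) ∘ₗ e.symm.toLinearMap, ?_⟩
  intro a b x y hx hy
  simp [he hx, DirectSum.toModule_lof, hs a hy]

/-- A linear identity holds everywhere once it holds on homogeneous elements. -/
theorem eq_of_homogeneous {ι : Type*} [DecidableEq ι] {𝒜 : ι → Submodule K A}
    (hA : DirectSum.IsInternal 𝒜) {B : Type*} [AddCommGroup B] [Module K B] {f g : A →ₗ[K] B}
    (h : ∀ a, ∀ x ∈ 𝒜 a, f x = g x) : f = g := by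
  ext x
  have hx : x ∈ ⨆ i, 𝒜 i := by rw [hA.submodule_iSup_eq_top]; trivial
  induction hx using Submodule.iSup_induction' with
  | mem a x hx => exact h a x hx
  | zero => simp
  | add x y _ _ hx hy => simp [hx, hy]

variable {ε : SkewBicharacter G K} {𝒜 : G → Submodule K A}

theorem induced_assoc (Z : ZinbielColorAlgebra ε 𝒜) {mul : A →ₗ[K] A →ₗ[K] A}
    (hmul : ∀ {a b : G} {x y : A}, x ∈ 𝒜 a → y ∈ 𝒜 b →
      mul x y = Z.dia x y + ε.ε a b • Z.dia y x)
    (hgr : ∀ {a b : G} {x y : A}, x ∈ 𝒜 a → y ∈ 𝒜 b → mul x y ∈ 𝒜 (a + b))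
    {a b c : G} {x y z : A} (hx : x ∈ 𝒜 a) (hy : y ∈ 𝒜 b) (hz : z ∈ 𝒜 c) :
    mul (mul x y) z = mul x (mul y z) := by
  rw [hmul (hgr hx hy) hz, hmul hx (hgr hy hz), hmul hx hy, hmul hy hz]
  simp only [map_add, map_smul, LinearMap.add_apply, LinearMap.smul_apply,
    Z.zinbiel hx hy hz, Z.zinbiel hx hz hy, Z.zinbiel hz hx hy, Z.zinbiel hz hy hx,
    ε.add_left, ε.add_right, ε.swap_eq_inv a c, ε.swap_eq_inv b c]
  have h1 := ε.ne_zero a c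
  have h2 := ε.ne_zero b c
  match_scalars <;> field_simp

theorem induced_jacobi (L : PreLieColorAlgebra ε 𝒜) {br : A →ₗ[K] A →ₗ[K] A}
    (hbr : ∀ {a b : G} {x y : A}, x ∈ 𝒜 a → y ∈ 𝒜 b →
      br x y = L.mul x y - ε.ε a b • L.mul y x)
    (hgr : ∀ {a b : G} {x y : A}, x ∈ 𝒜 a → y ∈ 𝒜 b → br x y ∈ 𝒜 (a + b))
    {a b c : G} {x y z : A} (hx : x ∈ 𝒜 a) (hy : y ∈ 𝒜 b) (hz : z ∈ 𝒜 c) :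
    ε.ε c a • br x (br y z) + ε.ε b c • br z (br x y) + ε.ε a b • br y (br z x) = 0 := by
  rw [hbr hx (hgr hy hz), hbr hz (hgr hx hy), hbr hy (hgr hz hx), hbr hx hy, hbr hy hz, hbr hz hx]
  have h1 := ε.ne_zero a b
  have h2 := ε.ne_zero b c
  have h3 := ε.ne_zero c a
  have e1 := L.prelie hx hy hz
  have e2 := L.prelie hy hz hx
  have e3 := L.prelie hz hx hy
  simp only [map_sub, map_smul, LinearMap.sub_apply, LinearMap.smul_apply, ε.add_right,
    ε.swap_eq_inv a b, ε.swap_eq_inv b c, ε.swap_eq_inv c a]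
  linear_combination (norm := skip)
    (-ε.ε c a) • e1 - ε.ε a b • e2 - ε.ε b c • e3
  match_scalars <;> field_simp <;> ring

/-- The tensor `P` of the induced operations is exactly the combination of `F1` and `F2` to which
the second axiom of a pre-`F`-manifold color algebra applies. -/
theorem Pop_eq (P : PreFManColorAlgebra ε 𝒜) {mul br : A →ₗ[K] A →ₗ[K] A}
    (hmul : ∀ {a b : G} {x y : A}, x ∈ 𝒜 a → y ∈ 𝒜 b →
      mul x y = P.toZinbiel.dia x y + ε.ε a b • P.toZinbiel.dia y x)
    (hmgr : ∀ {a b : G} {x y : A}, x ∈ 𝒜 a → y ∈ 𝒜 b → mul x y ∈ 𝒜 (a + b))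
    (hbr : ∀ {a b : G} {x y : A}, x ∈ 𝒜 a → y ∈ 𝒜 b →
      br x y = P.toPreLie.mul x y - ε.ε a b • P.toPreLie.mul y x)
    (hbgr : ∀ {a b : G} {x y : A}, x ∈ 𝒜 a → y ∈ 𝒜 b → br x y ∈ 𝒜 (a + b))
    {a b c : G} {x y z : A} (hx : x ∈ 𝒜 a) (hy : y ∈ 𝒜 b) (hz : z ∈ 𝒜 c) :
    Pop mul br (ε.ε a b) x y z =
      F1op P.toZinbiel.dia P.toPreLie.mul (ε.ε a b) x y z
        + ε.ε b c • F1op P.toZinbiel.dia P.toPreLie.mul (ε.ε a c) x z y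
        + ε.ε a (b + c) • F2op P.toZinbiel.dia P.toPreLie.mul (ε.ε b c) y z x := by
  unfold Pop F1op F2op
  rw [hbr hx (hmgr hy hz), hmul (hbgr hx hy) hz, hmul hy (hbgr hx hz), hmul hy hz, hbr hx hy,
    hbr hx hz]
  simp only [map_sub, map_add, map_smul, LinearMap.sub_apply, LinearMap.add_apply,
    LinearMap.smul_apply, ε.add_right, ε.add_left, ε.swap_eq_inv a b]
  have h1 := ε.ne_zero a b
  match_scalars <;> field_simp

theorem F2op_add_smul (dia star : A →ₗ[K] A →ₗ[K] A) (e r : K) (x y u v : A) :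
    F2op dia star e x y (u + r • v) = F2op dia star e x y u + r • F2op dia star e x y v := by
  simp only [F2op, map_add, map_smul]
  module

theorem induced_hertling_manin (P : PreFManColorAlgebra ε 𝒜) {mul br : A →ₗ[K] A →ₗ[K] A}
    (hmul : ∀ {a b : G} {x y : A}, x ∈ 𝒜 a → y ∈ 𝒜 b →
      mul x y = P.toZinbiel.dia x y + ε.ε a b • P.toZinbiel.dia y x)
    (hmgr : ∀ {a b : G} {x y : A}, x ∈ 𝒜 a → y ∈ 𝒜 b → mul x y ∈ 𝒜 (a + b))
    (hbr : ∀ {a b : G} {x y : A}, x ∈ 𝒜 a → y ∈ 𝒜 b →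
      br x y = P.toPreLie.mul x y - ε.ε a b • P.toPreLie.mul y x)
    (hbgr : ∀ {a b : G} {x y : A}, x ∈ 𝒜 a → y ∈ 𝒜 b → br x y ∈ 𝒜 (a + b))
    {a b c d : G} {x y z w : A} (hx : x ∈ 𝒜 a) (hy : y ∈ 𝒜 b) (hz : z ∈ 𝒜 c) (hw : w ∈ 𝒜 d) :
    Pop mul br (ε.ε (a + b) c) (mul x y) z w
      = mul x (Pop mul br (ε.ε b c) y z w) + ε.ε a b • mul y (Pop mul br (ε.ε a c) x z w) := by
  have hPgr : ∀ {g : G} {u : A}, u ∈ 𝒜 g → Pop mul br (ε.ε g c) u z w ∈ 𝒜 (g + (c + d)) := by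
    intro g u hu
    refine sub_mem (sub_mem (hbgr hu (hmgr hz hw)) ?_) (Submodule.smul_mem _ _ ?_)
    · rw [← add_assoc]
      exact hmgr (hbgr hu hz) hw
    · rw [add_left_comm]
      exact hmgr hz (hbgr hu hw)
  have r1 := P.rel_F2 hy hz hw hx
  have r2 := P.rel_F2 hx hz hw hy
  have f1 := P.rel_F1 hx hy hz hw
  have f2 := P.rel_F1 hx hy hw hz
  rw [← Pop_eq P hmul hmgr hbr hbgr hy hz hw] at r1
  rw [← Pop_eq P hmul hmgr hbr hbgr hx hz hw] at r2
  rw [hmul hx (hPgr hy), hmul hy (hPgr hx), r1, r2, Pop_eq P hmul hmgr hbr hbgr (hmgr hx hy) hz hw,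
    Pop_eq P hmul hmgr hbr hbgr hy hz hw, Pop_eq P hmul hmgr hbr hbgr hx hz hw, hmul hx hy, f1, f2,
    F2op_add_smul]
  simp only [map_add, map_smul, ε.add_right, ε.add_left, ε.swap_eq_inv a b]
  have h1 := ε.ne_zero a b
  match_scalars <;> field_simp <;> ring

end Induced

section Theorems

variable {K G A V : Type*} [Field K] [CharZero K] [AddCommGroup G]
  [AddCommGroup A] [Module K A] [AddCommGroup V] [Module K V]

theorem preFMan_to_fManColorAlgebra [DecidableEq G]
    (ε : SkewBicharacter G K) (𝒜 : G → Submodule K A) (hA : DirectSum.IsInternal 𝒜)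
    (P : PreFManColorAlgebra ε 𝒜) :
    ∃ F : FManColorAlgebra ε 𝒜,
      (∀ {a b : G} {x y : A}, x ∈ 𝒜 a → y ∈ 𝒜 b →
        F.toComm.mul x y = P.toZinbiel.dia x y + ε.ε a b • P.toZinbiel.dia y x) ∧
      (∀ {a b : G} {x y : A}, x ∈ 𝒜 a → y ∈ 𝒜 b →
        F.toLie.bracket x y = P.toPreLie.mul x y - ε.ε a b • P.toPreLie.mul y x) := by
  obtain ⟨t, ht⟩ := exists_twistedFlip ε 𝒜 hA P.toZinbiel.dia
  obtain ⟨s, hs⟩ := exists_twistedFlip ε 𝒜 hA P.toPreLie.mul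
  have hmul : ∀ {a b : G} {x y : A}, x ∈ 𝒜 a → y ∈ 𝒜 b →
      (P.toZinbiel.dia + t) x y = P.toZinbiel.dia x y + ε.ε a b • P.toZinbiel.dia y x := by
    intro a b x y hx hy
    simp [ht hx hy]
  have hbr : ∀ {a b : G} {x y : A}, x ∈ 𝒜 a → y ∈ 𝒜 b →
      (P.toPreLie.mul - s) x y = P.toPreLie.mul x y - ε.ε a b • P.toPreLie.mul y x := by
    intro a b x y hx hy
    simp [hs hx hy]
  generalize P.toZinbiel.dia + t = mul at hmul
  generalize P.toPreLie.mul - s = br at hbr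
  have hmgr : ∀ {a b : G} {x y : A}, x ∈ 𝒜 a → y ∈ 𝒜 b → mul x y ∈ 𝒜 (a + b) := by
    intro a b x y hx hy
    rw [hmul hx hy]
    exact add_mem (P.toZinbiel.grade hx hy)
      (Submodule.smul_mem _ _ (add_comm b a ▸ P.toZinbiel.grade hy hx))
  have hbgr : ∀ {a b : G} {x y : A}, x ∈ 𝒜 a → y ∈ 𝒜 b → br x y ∈ 𝒜 (a + b) := by
    intro a b x y hx hy
    rw [hbr hx hy]
    exact sub_mem (P.toPreLie.grade hx hy)
      (Submodule.smul_mem _ _ (add_comm b a ▸ P.toPreLie.grade hy hx))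
  refine ⟨⟨⟨mul, hmgr, ?_, ?_⟩, ⟨br, hbgr, ?_, induced_jacobi P.toPreLie hbr hbgr⟩,
    induced_hertling_manin P hmul hmgr hbr hbgr⟩, hmul, hbr⟩
  · intro a b x y hx hy
    rw [hmul hx hy, hmul hy hx, smul_add, smul_smul, ε.mul_symm, one_smul, add_comm]
  · -- Both sides are trilinear, so homogeneity may be assumed one argument at a time.
    have h : mul.compr₂ mul =
        LinearMap.lcomp K (A →ₗ[K] A) mul ∘ₗ LinearMap.llcomp K A A A ∘ₗ mul := by
      refine eq_of_homogeneous hA fun a x hx => eq_of_homogeneous hA fun b y hy =>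
        eq_of_homogeneous hA fun c z hz => ?_
      simpa using induced_assoc P.toZinbiel hmul hmgr hx hy hz
    intro x y z
    simpa using LinearMap.congr_fun (LinearMap.congr_fun (LinearMap.congr_fun h x) y) z
  · intro a b x y hx hy
    rw [hbr hx hy, hbr hy hx, smul_sub, smul_smul, ε.mul_symm, one_smul, neg_sub]

end Theorems
end

section
/- Let (A, ⋄, ∗, ε) be a pre-F-manifold color algebra, define x·y = x⋄y + ε(x,y) y⋄x and [x,y] = x∗y − ε(x,y) y∗x, and define L, 𝔏 : A → gl(A) by L_x y = x∗y and 𝔏_x y = x⋄y. Then (A; L, 𝔏) is a representation of the F-manifold color algebra (A, ·, [ , ], ε). -/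
/-!
The `ε`-twisted opposite of a bilinear product, extended bilinearly from homogeneous elements by
means of the grading, makes `x·y` and `[x,y]` globally defined bilinear maps. It then suffices to
argue on homogeneous elements.

The Zinbiel identity says `(x·y)⋄z = x⋄(y⋄z)`, and the pre-Lie identity says
`[x,y]∗z = x∗(y∗z) − ε(x,y) y∗(x∗z)`; associativity and the Jacobi identity follow, and these are
also the two representation axioms. The relation between the two products rests on the identity
(`pop_eq`)
`P_x(y,z) = F1(x,y,z) + ε(y,z) F1(x,z,y) + ε(x,y+z) F2(y,z,x)`,
together with `R(x,y)z = F1(x,y,z)` and `S(x,y)z = F2(x,y,z)`. With these the two defining relations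
of a pre-F-manifold color algebra are the two compatibility conditions of the representation. For
the Hertling–Manin relation, expand `x·P_y(z,w) + ε(x,y) y·P_x(z,w)`: the first defining relation
collects the `F1` terms, the second rewrites `P_y(z,w)⋄x` and `P_x(z,w)⋄y`, and the terms
`x⋄F2(z,w,y)` and `y⋄F2(z,w,x)` cancel.
-/

open Module

set_option synthInstance.maxHeartbeats 1000000
set_option maxHeartbeats 1000000

section Helpers

variable {K G A : Type*} [Field K] [AddCommGroup G] [AddCommGroup A] [Module K A]

/-! ### Homogeneous elements and the twisted opposite product -/

/-- The `ε`-twisted opposite of a bilinear product `B`: the bilinear map given by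
`(x, y) ↦ ε(x,y) B(y,x)` on homogeneous elements. -/
noncomputable def colorOpp [DecidableEq G] (ε : SkewBicharacter G K) {𝒜 : G → Submodule K A}
    (hA : DirectSum.IsInternal 𝒜) (B : A →ₗ[K] A →ₗ[K] A) : A →ₗ[K] A →ₗ[K] A :=
  let E := (LinearEquiv.ofBijective (DirectSum.coeLinearMap 𝒜) hA).symm.toLinearMap
  (DirectSum.toModule K G (A →ₗ[K] A) fun a =>
    (LinearMap.flip ((DirectSum.toModule K G (A →ₗ[K] A) fun b =>
      ε.ε a b • B.comp (𝒜 b).subtype).comp E)).comp (𝒜 a).subtype).comp E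

theorem colorOpp_apply [DecidableEq G] (ε : SkewBicharacter G K) {𝒜 : G → Submodule K A}
    (hA : DirectSum.IsInternal 𝒜) (B : A →ₗ[K] A →ₗ[K] A) {a b : G} {x y : A}
    (hx : x ∈ 𝒜 a) (hy : y ∈ 𝒜 b) : colorOpp ε hA B x y = ε.ε a b • B y x := by
  have key : ∀ {c : G} {u : A} (hu : u ∈ 𝒜 c),
      (LinearEquiv.ofBijective (DirectSum.coeLinearMap 𝒜) hA).symm u
        = DirectSum.lof K G (fun i => 𝒜 i) c ⟨u, hu⟩ := by
    intro c u hu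
    rw [LinearEquiv.symm_apply_eq]
    exact (DirectSum.coeLinearMap_lof 𝒜 c ⟨u, hu⟩).symm
  simp [colorOpp, key hx, key hy]

/-! ### The product of a Zinbiel color algebra -/

theorem zinbiel_left_comm {ε : SkewBicharacter G K} {𝒜 : G → Submodule K A}
    (Z : ZinbielColorAlgebra ε 𝒜) {a b c : G} {x y z : A}
    (hx : x ∈ 𝒜 a) (hy : y ∈ 𝒜 b) (hz : z ∈ 𝒜 c) :
    Z.dia x (Z.dia y z) = ε.ε a b • Z.dia y (Z.dia x z) := by
  rw [Z.zinbiel hx hy hz, Z.zinbiel hy hx hz, smul_add, smul_smul, ε.mul_symm, one_smul, add_comm]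

/-- The `ε`-commutative associative algebra of a Zinbiel color algebra. -/
noncomputable def zinbielComm [DecidableEq G] {ε : SkewBicharacter G K} {𝒜 : G → Submodule K A}
    (hA : DirectSum.IsInternal 𝒜) (Z : ZinbielColorAlgebra ε 𝒜) : CommColorAlgebra ε 𝒜 where
  mul := Z.dia + colorOpp ε hA Z.dia
  grade := by
    intro a b x y hx hy
    simp only [LinearMap.add_apply, colorOpp_apply ε hA _ hx hy]
    exact add_mem (Z.grade hx hy) (Submodule.smul_mem _ _ (add_comm b a ▸ Z.grade hy hx))
  comm := by
    intro a b x y hx hy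
    simp only [LinearMap.add_apply, colorOpp_apply ε hA _ hx hy, colorOpp_apply ε hA _ hy hx,
      smul_add, smul_smul, ε.mul_symm, one_smul]
    rw [add_comm]
  assoc := by
    set m := Z.dia + colorOpp ε hA Z.dia with hm
    have hmul : ∀ {a b : G} {x y : A}, x ∈ 𝒜 a → y ∈ 𝒜 b →
        m x y = Z.dia x y + ε.ε a b • Z.dia y x := by
      intro a b x y hx hy
      rw [hm, LinearMap.add_apply, LinearMap.add_apply, colorOpp_apply ε hA _ hx hy]
    have hgr : ∀ {a b : G} {x y : A}, x ∈ 𝒜 a → y ∈ 𝒜 b → m x y ∈ 𝒜 (a + b) := by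
      intro a b x y hx hy
      rw [hmul hx hy]
      exact add_mem (Z.grade hx hy) (Submodule.smul_mem _ _ (add_comm b a ▸ Z.grade hy hx))
    intro x y z
    induction x using homogeneous_induction hA with
    | add x x' h h' => simp only [map_add, LinearMap.add_apply, h, h']
    | hom a x hx =>
    induction y using homogeneous_induction hA with
    | add y y' h h' => simp only [map_add, LinearMap.add_apply, h, h']
    | hom b y hy =>
    induction z using homogeneous_induction hA with
    | add z z' h h' => simp only [map_add, h, h']
    | hom c z hz =>
    rw [hmul (hgr hx hy) hz, hmul hx (hgr hy hz), hmul hx hy, hmul hy hz]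
    have e1 := Z.zinbiel hx hy hz
    have e2 := Z.zinbiel hy hz hx
    have e3 := zinbiel_left_comm Z hx hz hy
    have e4 := zinbiel_left_comm Z hy hz hx
    simp only [map_add, map_smul, LinearMap.add_apply, LinearMap.smul_apply, ε.add_left,
      ε.add_right]
    linear_combination (norm := module) -e1 - (ε.ε b c) • e3 + (ε.ε a b * ε.ε a c) • (e2 - e4)

theorem zinbielComm_mul [DecidableEq G] {ε : SkewBicharacter G K} {𝒜 : G → Submodule K A}
    (hA : DirectSum.IsInternal 𝒜) (Z : ZinbielColorAlgebra ε 𝒜) {a b : G} {x y : A}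
    (hx : x ∈ 𝒜 a) (hy : y ∈ 𝒜 b) :
    (zinbielComm hA Z).mul x y = Z.dia x y + ε.ε a b • Z.dia y x := by
  simp only [zinbielComm, LinearMap.add_apply, colorOpp_apply ε hA _ hx hy]

/-! ### The bracket of a pre-Lie color algebra -/

/-- The Lie color algebra of a pre-Lie color algebra. -/
noncomputable def preLieLie [DecidableEq G] {ε : SkewBicharacter G K} {𝒜 : G → Submodule K A}
    (hA : DirectSum.IsInternal 𝒜) (Q : PreLieColorAlgebra ε 𝒜) : LieColorAlgebra ε 𝒜 where
  bracket := Q.mul - colorOpp ε hA Q.mul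
  grade := by
    intro a b x y hx hy
    simp only [LinearMap.sub_apply, colorOpp_apply ε hA _ hx hy]
    exact sub_mem (Q.grade hx hy) (Submodule.smul_mem _ _ (add_comm b a ▸ Q.grade hy hx))
  skew := by
    intro a b x y hx hy
    simp only [LinearMap.sub_apply, colorOpp_apply ε hA _ hx hy, colorOpp_apply ε hA _ hy hx,
      smul_sub, smul_smul, ε.mul_symm, one_smul]
    rw [neg_sub]
  jacobi := by
    set m := Q.mul - colorOpp ε hA Q.mul with hm
    have hbr : ∀ {a b : G} {x y : A}, x ∈ 𝒜 a → y ∈ 𝒜 b →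
        m x y = Q.mul x y - ε.ε a b • Q.mul y x := by
      intro a b x y hx hy
      rw [hm, LinearMap.sub_apply, LinearMap.sub_apply, colorOpp_apply ε hA _ hx hy]
    have hgr : ∀ {a b : G} {x y : A}, x ∈ 𝒜 a → y ∈ 𝒜 b → m x y ∈ 𝒜 (a + b) := by
      intro a b x y hx hy
      rw [hbr hx hy]
      exact sub_mem (Q.grade hx hy) (Submodule.smul_mem _ _ (add_comm b a ▸ Q.grade hy hx))
    intro a b c x y z hx hy hz
    rw [hbr hx (hgr hy hz), hbr hz (hgr hx hy), hbr hy (hgr hz hx), hbr hx hy, hbr hy hz,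
      hbr hz hx]
    have e1 := Q.prelie hx hy hz
    have e2 := Q.prelie hy hz hx
    have e3 := Q.prelie hz hx hy
    simp only [map_sub, map_smul, LinearMap.sub_apply, LinearMap.smul_apply, ε.add_right]
    have i1 : ε.ε b a = (ε.ε a b)⁻¹ := eq_inv_of_mul_eq_one_right (ε.mul_symm a b)
    have i2 : ε.ε c a = (ε.ε a c)⁻¹ := eq_inv_of_mul_eq_one_right (ε.mul_symm a c)
    have i3 : ε.ε c b = (ε.ε b c)⁻¹ := eq_inv_of_mul_eq_one_right (ε.mul_symm b c)
    have n1 := ε.ne_zero a b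
    have n2 := ε.ne_zero a c
    have n3 := ε.ne_zero b c
    rw [i2] at e3 ⊢
    rw [i1, i3]
    linear_combination (norm := (match_scalars <;> field_simp <;> ring)) (-(ε.ε a c)⁻¹) • e1 - (ε.ε a b) • e2 - (ε.ε b c) • e3

theorem preLieLie_bracket [DecidableEq G] {ε : SkewBicharacter G K} {𝒜 : G → Submodule K A}
    (hA : DirectSum.IsInternal 𝒜) (Q : PreLieColorAlgebra ε 𝒜) {a b : G} {x y : A}
    (hx : x ∈ 𝒜 a) (hy : y ∈ 𝒜 b) :
    (preLieLie hA Q).bracket x y = Q.mul x y - ε.ε a b • Q.mul y x := by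
  simp only [preLieLie, LinearMap.sub_apply, colorOpp_apply ε hA _ hx hy]

/-! ### The F-manifold color algebra of a pre-F-manifold color algebra -/

/-- `P_x(y,z) = F1(x,y,z) + ε(y,z) F1(x,z,y) + ε(x,y+z) F2(y,z,x)` for the products induced by a
Zinbiel and a pre-Lie product on the same graded space. -/
theorem pop_eq [DecidableEq G] {ε : SkewBicharacter G K} {𝒜 : G → Submodule K A}
    (hA : DirectSum.IsInternal 𝒜) (Z : ZinbielColorAlgebra ε 𝒜) (Q : PreLieColorAlgebra ε 𝒜)
    {a b c : G} {x y z : A} (hx : x ∈ 𝒜 a) (hy : y ∈ 𝒜 b) (hz : z ∈ 𝒜 c) :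
    Pop (zinbielComm hA Z).mul (preLieLie hA Q).bracket (ε.ε a b) x y z
      = F1op Z.dia Q.mul (ε.ε a b) x y z + ε.ε b c • F1op Z.dia Q.mul (ε.ε a c) x z y
        + ε.ε a (b + c) • F2op Z.dia Q.mul (ε.ε b c) y z x := by
  rw [Pop, preLieLie_bracket hA Q hx ((zinbielComm hA Z).grade hy hz),
    zinbielComm_mul hA Z ((preLieLie hA Q).grade hx hy) hz,
    zinbielComm_mul hA Z hy ((preLieLie hA Q).grade hx hz), zinbielComm_mul hA Z hy hz,
    preLieLie_bracket hA Q hx hy, preLieLie_bracket hA Q hx hz]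
  have i1 : ε.ε b a = (ε.ε a b)⁻¹ := eq_inv_of_mul_eq_one_right (ε.mul_symm a b)
  have n1 := ε.ne_zero a b
  simp only [F1op, F2op, map_sub, map_add, map_smul, LinearMap.sub_apply, LinearMap.add_apply,
    LinearMap.smul_apply, ε.add_right, ε.add_left, i1]
  match_scalars <;> field_simp

/-- The F-manifold color algebra of a pre-F-manifold color algebra. -/
noncomputable def preFManFMan [DecidableEq G] {ε : SkewBicharacter G K} {𝒜 : G → Submodule K A}
    (hA : DirectSum.IsInternal 𝒜) (P : PreFManColorAlgebra ε 𝒜) : FManColorAlgebra ε 𝒜 where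
  toComm := zinbielComm hA P.toZinbiel
  toLie := preLieLie hA P.toPreLie
  hertling_manin := by
    intro a b c d x y z w hx hy hz hw
    have hP : ∀ {a : G} {x : A}, x ∈ 𝒜 a →
        Pop (zinbielComm hA P.toZinbiel).mul (preLieLie hA P.toPreLie).bracket (ε.ε a c) x z w
          ∈ 𝒜 (a + (c + d)) := by
      intro a x hx
      refine sub_mem (sub_mem ?_ ?_) (Submodule.smul_mem _ _ ?_)
      · exact (preLieLie hA _).grade hx ((zinbielComm hA _).grade hz hw)
      · exact add_assoc a c d ▸ (zinbielComm hA _).grade ((preLieLie hA _).grade hx hz) hw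
      · exact add_left_comm c a d ▸ (zinbielComm hA _).grade hz ((preLieLie hA _).grade hx hw)
    rw [zinbielComm_mul hA _ hx (hP hy), zinbielComm_mul hA _ hy (hP hx),
      pop_eq hA _ _ ((zinbielComm hA _).grade hx hy) hz hw, pop_eq hA _ _ hx hz hw,
      pop_eq hA _ _ hy hz hw, P.rel_F2 hx hz hw hy, P.rel_F2 hy hz hw hx,
      zinbielComm_mul hA _ hx hy, P.rel_F1 hx hy hz hw, P.rel_F1 hx hy hw hz]
    have hF2 : ∀ (e k : K) (u v : A), F2op P.toZinbiel.dia P.toPreLie.mul e z w (u + k • v)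
        = F2op P.toZinbiel.dia P.toPreLie.mul e z w u
          + k • F2op P.toZinbiel.dia P.toPreLie.mul e z w v := by
      intro e k u v
      simp only [F2op, map_add, map_smul]
      module
    have i1 : ε.ε b a = (ε.ε a b)⁻¹ := eq_inv_of_mul_eq_one_right (ε.mul_symm a b)
    have n1 := ε.ne_zero a b
    simp only [hF2, map_add, map_smul, ε.add_right, ε.add_left, i1]
    match_scalars <;> field_simp <;> ring

/-! ### The regular representation -/

/-- The left multiplications `L` and `𝔏` as a representation of `preFManFMan hA P`. -/
noncomputable def preFManRegularRep [DecidableEq G] {ε : SkewBicharacter G K}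
    {𝒜 : G → Submodule K A} (hA : DirectSum.IsInternal 𝒜) (P : PreFManColorAlgebra ε 𝒜) :
    FManColorRep ε (preFManFMan hA P) 𝒜 where
  toLieRep :=
    { ρ := P.toPreLie.mul
      grade := by
        intro a b v x hv hx
        exact add_comm b a ▸ P.toPreLie.grade hx hv
      map_bracket := by
        intro a b x y hx hy
        ext z
        induction z using homogeneous_induction hA with
        | add z z' h h' => rw [map_add, map_add, h, h']
        | hom c z hz =>
        have e := P.toPreLie.prelie hx hy hz
        simp only [preFManFMan, preLieLie_bracket hA _ hx hy, map_sub, map_smul,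
          LinearMap.sub_apply, LinearMap.smul_apply, Module.End.mul_apply]
        linear_combination (norm := module) e }
  toCommRep :=
    { μ := P.toZinbiel.dia
      grade := by
        intro a b v x hv hx
        exact add_comm b a ▸ P.toZinbiel.grade hx hv
      map_mul := by
        intro x y
        ext z
        induction x using homogeneous_induction hA with
        | add x x' h h' =>
          simp only [map_add, LinearMap.add_apply, h, h', Module.End.mul_apply]
        | hom a x hx =>
        induction y using homogeneous_induction hA with
        | add y y' h h' =>
          simp only [map_add, LinearMap.add_apply, h, h', Module.End.mul_apply]
        | hom b y hy =>
        induction z using homogeneous_induction hA with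
        | add z z' h h' => rw [map_add, map_add, h, h']
        | hom c z hz =>
        simp only [preFManFMan, zinbielComm_mul hA _ hx hy, map_add, map_smul,
          LinearMap.add_apply, LinearMap.smul_apply, Module.End.mul_apply]
        exact (P.toZinbiel.zinbiel hx hy hz).symm }
  rel_R := by
    intro a b c x y z hx hy hz
    ext w
    induction w using homogeneous_induction hA with
    | add w w' h h' => rw [map_add, map_add, h, h']
    | hom d w hw =>
    have e := P.rel_F1 hx hy hz hw
    -- The brackets in `R` are those in `F1`, since their arguments are homogeneous.
    have hb := preLieLie_bracket hA P.toPreLie ((zinbielComm hA P.toZinbiel).grade hx hy) hz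
    rw [zinbielComm_mul hA _ hx hy] at hb
    simp only [preFManFMan, Rop, zinbielComm_mul hA _ hx hy, hb, preLieLie_bracket hA _ hx hz,
      preLieLie_bracket hA _ hy hz]
    exact e
  rel_S := by
    intro a b c x y z hx hy hz
    ext w
    induction w using homogeneous_induction hA with
    | add w w' h h' => rw [map_add, map_add, h, h']
    | hom d w hw =>
    have e := P.rel_F2 hx hy hz hw
    simp only [preFManFMan, Sop, pop_eq hA _ _ hx hy hz, zinbielComm_mul hA _ hy hz]
    exact e

end Helpers

section Theorems

variable {K G A V : Type*} [Field K] [CharZero K] [AddCommGroup G]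
  [AddCommGroup A] [Module K A] [AddCommGroup V] [Module K V]

theorem preFMan_regular_rep [DecidableEq G]
    (ε : SkewBicharacter G K) (𝒜 : G → Submodule K A) (hA : DirectSum.IsInternal 𝒜)
    (P : PreFManColorAlgebra ε 𝒜) :
    ∃ F : FManColorAlgebra ε 𝒜,
      (∀ {a b : G} {x y : A}, x ∈ 𝒜 a → y ∈ 𝒜 b →
        F.toComm.mul x y = P.toZinbiel.dia x y + ε.ε a b • P.toZinbiel.dia y x) ∧
      (∀ {a b : G} {x y : A}, x ∈ 𝒜 a → y ∈ 𝒜 b →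
        F.toLie.bracket x y = P.toPreLie.mul x y - ε.ε a b • P.toPreLie.mul y x) ∧
      ∃ Rp : FManColorRep ε F 𝒜,
        Rp.toLieRep.ρ = P.toPreLie.mul ∧ Rp.toCommRep.μ = P.toZinbiel.dia := by
  exact ⟨preFManFMan hA P, zinbielComm_mul hA P.toZinbiel, preLieLie_bracket hA P.toPreLie,
    preFManRegularRep hA P, rfl, rfl⟩

end Theorems
end

section
/- Let (A, ⋄, ε) be a Zinbiel color algebra and (A, ∗, ε) a pre-Lie color algebra on the same G-graded vector space. Define x·y = x⋄y + ε(x,y) y⋄x, [x,y] = x∗y − ε(x,y) y∗x, P_x(y,z) = [x, y·z] − [x,y]·z − ε(x,y) y·[x,z], F1(x,y,z) = x∗(y⋄z) − ε(x,y) y⋄(x∗z) − [x,y]⋄z, and F2(x,y,z) = x⋄(y∗z) + ε(x,y) y⋄(x∗z) − (x·y)∗z. Then for all homogeneous x, y, z ∈ A: P_x(y,z) = F1(x,y,z) + ε(y,z)F1(x,z,y) + ε(x, y+z)F2(y,z,x). -/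
open Module

set_option synthInstance.maxHeartbeats 1000000
set_option maxHeartbeats 1000000

section Theorems

variable {K G A V : Type*} [Field K] [CharZero K] [AddCommGroup G]
  [AddCommGroup A] [Module K A] [AddCommGroup V] [Module K V]

theorem P_eq_F1_F2
    (ε : SkewBicharacter G K) (𝒜 : G → Submodule K A)
    (Z : ZinbielColorAlgebra ε 𝒜) (Pl : PreLieColorAlgebra ε 𝒜)
    {a b c : G} {x y z : A} (hx : x ∈ 𝒜 a) (hy : y ∈ 𝒜 b) (hz : z ∈ 𝒜 c) :
    cbr Pl.mul (ε.ε a (b + c)) x (cdot Z.dia (ε.ε b c) y z)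
        - cdot Z.dia (ε.ε (a + b) c) (cbr Pl.mul (ε.ε a b) x y) z
        - ε.ε a b • cdot Z.dia (ε.ε b (a + c)) y (cbr Pl.mul (ε.ε a c) x z)
      = F1op Z.dia Pl.mul (ε.ε a b) x y z
        + ε.ε b c • F1op Z.dia Pl.mul (ε.ε a c) x z y
        + ε.ε a (b + c) • F2op Z.dia Pl.mul (ε.ε b c) y z x := by
  -- The only use of skew-symmetry: in `y·[x,z]`, the term `[x,z]⋄y` carries the factor
  -- `ε(x,y) ε(y,x+z)`, which collapses to `ε(y,z)`.
  have hskew : ε.ε a b * ε.ε b a = 1 := ε.mul_symm a b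
  simp only [cbr, cdot, F1op, F2op, ε.add_right, ε.add_left, map_add, map_sub, map_smul,
    LinearMap.add_apply, LinearMap.sub_apply, LinearMap.smul_apply]
  linear_combination (norm := module)
    hskew • (-(ε.ε b c) • (Z.dia (Pl.mul x z) y - ε.ε a c • Z.dia (Pl.mul z x) y))

end Theorems
end
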